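/- Given positive numbers T, R, λ, α with 0 < α ≤ 1 and λ < R, let β ∈ [0,1] and γ ∈ (0,α). Then there exist constants C ∈ (0, 1/(4R)) and K = K(R,λ,α,T) > 0 such that for all v, v̄ ∈ B(R,λ,α) and all x, y, ξ ∈ ℝ, 0 ≤ τ < t ≤ T: (i) |φ_{[v]}(x,t,ξ,τ) − φ_{[v̄]}(x,t,ξ,τ)| ≤ K ‖v − v̄‖_{α,α/2} (t−τ)^{−(3−α)/2} exp(−C(x−ξ)²/(t−τ)); and (ii) |(φ_{[v]}(x,t,ξ,τ) − φ_{[v̄]}(x,t,ξ,τ)) − (φ_{[v]}(y,t,ξ,τ) − φ_{[v̄]}(y,t,ξ,τ))| ≤ K ‖v − v̄‖_{α,α/2}^β |x−y|^{γ(1−β)} (t−τ)^{−(3−(α−γ(1−β)))/2} (exp(−C(x−ξ)²/(t−τ)) + exp(−C(y−ξ)²/(t−τ))). -/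

import Mathlib

/-!
The Levi series is controlled by comparing every iterated kernel with a convolution semigroup.

Write space-time points as `(t, x)`. The kernels
`gk C s (t, x) = t^{s-3/2} exp(-C x²/t) / (Γ(s) √(π/C))`, extended by zero to `t ≤ 0`, satisfy
`gk s ⋆ gk r = gk (s + r)` (`gk_conv`): Gaussians convolve in space, Beta densities integrate to
one in time. Hence a kernel with `|κ| ≤ M gk (α/2)` has iterates bounded by
`M^{m+1} gk ((m+1) α/2)` (`kit_bound`). Telescoping gives the same bound, with an extra factor
`(m+1) d`, for the difference of the iterates of two kernels with `|κ - κ'| ≤ M d gk (α/2)`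
(`kit_diff`), and a modulus of continuity of `κ` in its first variable is inherited by all
iterates (`kit_hol`). The factor `1 / Γ` in `gk` makes the resulting series converge to a multiple
of its first term (`tsum_gk`).

It remains to verify the hypotheses for `κ = (LZ)₁`. In the variables `h = √(t-τ)`,
`u = (x-ξ)/h` this kernel is `h^{α-3}` times a sum of terms `ω q(a(ξ,τ), u)`, where `q` is the unit
heat kernel or one of its first two derivatives, and the weights satisfy `|ω| ≤ W (1 + |u|)`
thanks to the Hölder continuity of `a`. Gaussian bounds for `q`, for its increments in `u` and in
the diffusivity (`Prof`) give the three kernel estimates (`kernel_bounds`).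

Summation yields (i), and Hölder continuity in `x` of each `φ` with exponent `γ` (`phi_bounds`).
Estimate (ii) is the geometric mean, with weights `β` and `1 - β`, of the bound from (i) at `x` and
`y` and of the Hölder bounds for the two functions `φ` (`le_interp`).
-/

open MeasureTheory Filter

noncomputable section

/-- The parametrix: fundamental solution of the frozen-coefficient heat equation,
`Z(x,t,ξ,τ) = (4π a(ξ,τ)(t-τ))^{-1/2} exp(-(x-ξ)²/(4 a(ξ,τ)(t-τ)))`. -/
def Zf (a : ℝ → ℝ → ℝ) (x t ξ τ : ℝ) : ℝ :=
  (Real.sqrt (4 * Real.pi * a ξ τ * (t - τ)))⁻¹ *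
    Real.exp (-(x - ξ) ^ 2 / (4 * a ξ τ * (t - τ)))

/-- `(LZ)₁ = (a(ξ,τ) - a(x,t)) ∂ₓₓZ + b ∂ₓZ + c Z`. -/
def LZ1 (a b c : ℝ → ℝ → ℝ) (x t ξ τ : ℝ) : ℝ :=
  (a ξ τ - a x t) * iteratedDeriv 2 (fun y => Zf a y t ξ τ) x +
    b x t * deriv (fun y => Zf a y t ξ τ) x + c x t * Zf a x t ξ τ

/-- `LZm a b c m = (LZ)_{m+1}`, defined recursively by
`(LZ)_{m+1}(x,t,ξ,τ) = ∫_τ^t ∫_ℝ (LZ)₁(x,t,y,σ)(LZ)_m(y,σ,ξ,τ) dy dσ`. -/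
def LZm (a b c : ℝ → ℝ → ℝ) : ℕ → ℝ → ℝ → ℝ → ℝ → ℝ
  | 0 => LZ1 a b c
  | m + 1 => fun x t ξ τ => ∫ σ in τ..t, ∫ y : ℝ, LZ1 a b c x t y σ * LZm a b c m y σ ξ τ

/-- `φ(x,t,ξ,τ) = Σ_{m=1}^∞ (-1)^m (LZ)_m(x,t,ξ,τ)`. -/
def phiP (a b c : ℝ → ℝ → ℝ) (x t ξ τ : ℝ) : ℝ :=
  ∑' m : ℕ, (-1 : ℝ) ^ (m + 1) * LZm a b c m x t ξ τ

/-- The parametrix-constructed fundamental solution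
`Γ = Z + ∫_τ^t ∫_ℝ Z(x,t,y,σ) φ(y,σ,ξ,τ) dy dσ`. -/
def GammaP (a b c : ℝ → ℝ → ℝ) (x t ξ τ : ℝ) : ℝ :=
  Zf a x t ξ τ + ∫ σ in τ..t, ∫ y : ℝ, Zf a x t y σ * phiP a b c y σ ξ τ

/-- The sup norm of `u` on `ℝ × [0,T]`. -/
def supN (T : ℝ) (u : ℝ → ℝ → ℝ) : ℝ :=
  sSup {r : ℝ | ∃ x t, 0 ≤ t ∧ t ≤ T ∧ r = |u x t|}

/-- The Hölder seminorm of exponents `(α, α/2)` of `u` on `ℝ × [0,T]`. -/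
def holS (T α : ℝ) (u : ℝ → ℝ → ℝ) : ℝ :=
  sSup {r : ℝ | ∃ x t x' t', 0 ≤ t ∧ t ≤ T ∧ 0 ≤ t' ∧ t' ≤ T ∧ ¬(x = x' ∧ t = t') ∧
    r = |u x t - u x' t'| / (|x - x'| ^ α + |t - t'| ^ (α / 2))}

/-- The norm `‖u‖_{α,α/2}` on `ℝ × [0,T]`. -/
def holN (T α : ℝ) (u : ℝ → ℝ → ℝ) : ℝ := supN T u + holS T α u

/-- `u` lies in `C^{α,α/2}(ℝ×[0,T])` with sup bound `C1` and Hölder constant `C2`. -/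
def inC (T α C1 C2 : ℝ) (u : ℝ → ℝ → ℝ) : Prop :=
  (∀ x t, 0 ≤ t → t ≤ T → |u x t| ≤ C1) ∧
  ∀ x t x' t', 0 ≤ t → t ≤ T → 0 ≤ t' → t' ≤ T →
    |u x t - u x' t'| ≤ C2 * (|x - x'| ^ α + |t - t'| ^ (α / 2))

/-- `v = (a,b,c) ∈ B(R,λ,α)`: `a ≥ λ` and the `C^{α,α/2}` norms of `a`, `b`, `c`
are `< R`. -/
def memB (T R lam α : ℝ) (a b c : ℝ → ℝ → ℝ) : Prop :=
  (∀ x t, 0 ≤ t → t ≤ T → lam ≤ a x t) ∧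
  (∃ C1 C2 : ℝ, 0 ≤ C1 ∧ 0 ≤ C2 ∧ C1 + C2 < R ∧ inC T α C1 C2 a) ∧
  (∃ C1 C2 : ℝ, 0 ≤ C1 ∧ 0 ≤ C2 ∧ C1 + C2 < R ∧ inC T α C1 C2 b) ∧
  (∃ C1 C2 : ℝ, 0 ≤ C1 ∧ 0 ≤ C2 ∧ C1 + C2 < R ∧ inC T α C1 C2 c)

/-- The distance `‖v - v̄‖_{α,α/2}` between two coefficient triples. -/
def vDist (T α : ℝ) (a b c abar bbar cbar : ℝ → ℝ → ℝ) : ℝ :=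
  max (holN T α (fun x t => a x t - abar x t))
    (max (holN T α (fun x t => b x t - bbar x t))
      (holN T α (fun x t => c x t - cbar x t)))

end

/-! ### The Gaussian convolution semigroup -/

noncomputable section

/-- The normalized space-time Gaussian of order `s`, at the point `p = (t, x)` (time first):
`t^{s-3/2} exp(-C x²/t) / (Γ(s) √(π/C))` for `t > 0`, and `0` for `t ≤ 0`. The normalization
makes `s ↦ gk C s` a convolution semigroup. -/
def gk (C s : ℝ) (p : ℝ × ℝ) : ℝ :=
  if 0 < p.1 then
    p.1 ^ (s - 3 / 2) * Real.exp (-C * p.2 ^ 2 / p.1) / (Real.Gamma s * √(Real.pi / C))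
  else 0

lemma gk_nonneg {C s : ℝ} (hs : 0 < s) (p : ℝ × ℝ) : 0 ≤ gk C s p := by
  unfold gk
  have := Real.Gamma_pos_of_pos hs
  split_ifs with h
  · positivity
  · exact le_rfl

lemma gk_of_nonpos {C s : ℝ} {p : ℝ × ℝ} (h : p.1 ≤ 0) : gk C s p = 0 := by
  simp [gk, not_lt.mpr h]

lemma measurable_gk (C s : ℝ) : Measurable (gk C s) := by
  unfold gk
  refine Measurable.ite (measurableSet_lt measurable_const measurable_fst) ?_ measurable_const
  fun_prop

/-- Convolution of two centred Gaussians, by completing the square. -/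
lemma gauss_conv {C ρ θ : ℝ} (hC : 0 < C) (hρ : 0 < ρ) (hθ : 0 < θ) (x ξ : ℝ) :
    Integrable (fun y : ℝ => Real.exp (-C * (x - y) ^ 2 / ρ) * Real.exp (-C * (y - ξ) ^ 2 / θ)) ∧
    ∫ y : ℝ, Real.exp (-C * (x - y) ^ 2 / ρ) * Real.exp (-C * (y - ξ) ^ 2 / θ) =
      √(Real.pi / C) * √(ρ * θ / (ρ + θ)) * Real.exp (-C * (x - ξ) ^ 2 / (ρ + θ)) := by
  set b : ℝ := C * (ρ + θ) / (ρ * θ) with hb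
  set m : ℝ := (θ * x + ρ * ξ) / (ρ + θ) with hm
  have hbpos : 0 < b := by positivity
  have key : (fun y : ℝ => Real.exp (-C * (x - y) ^ 2 / ρ) * Real.exp (-C * (y - ξ) ^ 2 / θ)) =
      fun y => Real.exp (-C * (x - ξ) ^ 2 / (ρ + θ)) * Real.exp (-b * (y - m) ^ 2) := by
    funext y
    rw [← Real.exp_add, ← Real.exp_add]
    congr 1
    rw [hb, hm]
    field_simp
    ring
  rw [key]
  constructor
  · exact ((integrable_exp_neg_mul_sq hbpos).comp_sub_right m).const_mul _
  · rw [integral_const_mul, integral_sub_right_eq_self (fun y => Real.exp (-b * y ^ 2)) m,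
      integral_gaussian, ← Real.sqrt_mul (by positivity)]
    rw [mul_comm]
    congr 2
    rw [hb]
    field_simp

lemma integral_betaPDFReal {s r : ℝ} (hs : 0 < s) (hr : 0 < r) :
    Integrable (ProbabilityTheory.betaPDFReal s r) ∧
      ∫ u, ProbabilityTheory.betaPDFReal s r u = 1 := by
  have h := ProbabilityTheory.lintegral_betaPDF_eq_one hs hr
  have hn : 0 ≤ᵐ[volume] ProbabilityTheory.betaPDFReal s r := by
    refine Eventually.of_forall fun u => ?_
    by_cases hu : 0 < u ∧ u < 1
    · exact (ProbabilityTheory.betaPDFReal_pos hu.1 hu.2 hs hr).le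
    · simp [ProbabilityTheory.betaPDFReal, hu]
  have hm := (ProbabilityTheory.stronglyMeasurable_betaPDFReal s r).aestronglyMeasurable
    (μ := volume)
  constructor
  · refine ⟨hm, ?_⟩
    rw [hasFiniteIntegral_iff_ofReal hn]
    unfold ProbabilityTheory.betaPDF at h
    rw [h]
    exact ENNReal.one_lt_top
  · rw [integral_eq_lintegral_of_nonneg_ae hn hm]
    unfold ProbabilityTheory.betaPDF at h
    rw [h]
    simp

/-- The spatial integral of the product of two kernels is, as a function of the intermediate
time, a rescaled Beta density. -/
lemma gk_inner {C s r : ℝ} (hC : 0 < C) (hs : 0 < s) (hr : 0 < r) {t τ : ℝ} (h : τ < t)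
    (x ξ σ : ℝ) :
    Integrable (fun y : ℝ => gk C s ((t, x) - (σ, y)) * gk C r ((σ, y) - (τ, ξ))) ∧
    ∫ y : ℝ, gk C s ((t, x) - (σ, y)) * gk C r ((σ, y) - (τ, ξ)) =
      gk C (s + r) ((t, x) - (τ, ξ)) * (t - τ)⁻¹ *
        ProbabilityTheory.betaPDFReal r s ((σ - τ) / (t - τ)) := by
  have hd : 0 < t - τ := by linarith
  by_cases hσ : τ < σ ∧ σ < t
  · obtain ⟨h1, h2⟩ := hσ
    have hρ : 0 < t - σ := by linarith
    have hθ : 0 < σ - τ := by linarith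
    have hg := gauss_conv hC hρ hθ x ξ
    have e : (fun y : ℝ => gk C s ((t, x) - (σ, y)) * gk C r ((σ, y) - (τ, ξ))) =
      fun y => ((t - σ) ^ (s - 3 / 2) * (σ - τ) ^ (r - 3 / 2) /
        ((Real.Gamma s * √(Real.pi / C)) * (Real.Gamma r * √(Real.pi / C)))) *
        (Real.exp (-C * (x - y) ^ 2 / (t - σ)) * Real.exp (-C * (y - ξ) ^ 2 / (σ - τ))) := by
      funext y
      simp only [gk, Prod.mk_sub_mk, hρ, hθ, if_true]
      ring
    rw [e]
    refine ⟨hg.1.const_mul _, ?_⟩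
    rw [integral_const_mul, hg.2]
    have hu : 0 < (σ - τ) / (t - τ) ∧ (σ - τ) / (t - τ) < 1 :=
      ⟨by positivity, by rw [div_lt_one hd]; linarith⟩
    have hu1 : 1 - (σ - τ) / (t - τ) = (t - σ) / (t - τ) := by field_simp; ring
    simp only [gk, Prod.mk_sub_mk, hd, if_true, ProbabilityTheory.betaPDFReal, hu, and_self,
      ProbabilityTheory.beta, hu1]
    have e1 : t - σ + (σ - τ) = t - τ := by ring
    rw [e1]
    have gs := Real.Gamma_pos_of_pos hs
    have gr := Real.Gamma_pos_of_pos hr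
    have gsr := Real.Gamma_pos_of_pos (add_pos hs hr)
    have hq : 0 < √(Real.pi / C) := by have := Real.pi_pos; positivity
    rw [Real.div_rpow hθ.le hd.le, Real.div_rpow hρ.le hd.le, Real.sqrt_eq_rpow (_ / (t - τ)),
      Real.div_rpow (by positivity) hd.le, Real.mul_rpow hρ.le hθ.le]
    have p1 : (t - σ) ^ (s - 1) = (t - σ) ^ (s - 3 / 2) * (t - σ) ^ (1 / 2 : ℝ) := by
      rw [← Real.rpow_add hρ]; congr 1; ring
    have p2 : (σ - τ) ^ (r - 1) = (σ - τ) ^ (r - 3 / 2) * (σ - τ) ^ (1 / 2 : ℝ) := by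
      rw [← Real.rpow_add hθ]; congr 1; ring
    have p3 : (t - τ) ^ (s + r - 3 / 2) * (t - τ) ^ (1 / 2 : ℝ) =
        (t - τ) * ((t - τ) ^ (r - 1) * (t - τ) ^ (s - 1)) := by
      nth_rewrite 3 [← Real.rpow_one (t - τ)]
      rw [← Real.rpow_add hd, ← Real.rpow_add hd, ← Real.rpow_add hd]; congr 1; ring
    rw [p1, p2, add_comm r s]
    have n1 := (Real.rpow_pos_of_pos hd (r - 1)).ne'
    have n2 := (Real.rpow_pos_of_pos hd (s - 1)).ne'
    have n3 := (Real.rpow_pos_of_pos hd (1 / 2)).ne'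
    generalize (t - τ) ^ (s + r - 3 / 2) = Q at p3 ⊢
    field_simp
    linear_combination (-1 : ℝ) * p3
  · have hz : ∀ y : ℝ, gk C s ((t, x) - (σ, y)) * gk C r ((σ, y) - (τ, ξ)) = 0 := by
      intro y
      rcases not_and_or.mp hσ with h' | h'
      · rw [gk_of_nonpos (p := (σ, y) - (τ, ξ)) (by simp; linarith), mul_zero]
      · rw [gk_of_nonpos (p := (t, x) - (σ, y)) (by simp; linarith), zero_mul]
    have hb : ProbabilityTheory.betaPDFReal r s ((σ - τ) / (t - τ)) = 0 := by
      rw [ProbabilityTheory.betaPDFReal, if_neg]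
      rintro ⟨h1, h2⟩
      rw [div_lt_one hd] at h2
      exact hσ ⟨by have := (div_pos_iff_of_pos_right hd).mp h1; linarith, by linarith⟩
    simp only [hz, hb, mul_zero, integral_zero, and_true]
    exact integrable_zero _ _ _

/-- The semigroup law `gk s ⋆ gk r = gk (s + r)`: a Gaussian convolution in space and a Beta
integral in time. -/
lemma gk_conv {C s r : ℝ} (hC : 0 < C) (hs : 0 < s) (hr : 0 < r) (X Ξ : ℝ × ℝ) :
    Integrable (fun P : ℝ × ℝ => gk C s (X - P) * gk C r (P - Ξ)) ∧
    ∫ P : ℝ × ℝ, gk C s (X - P) * gk C r (P - Ξ) = gk C (s + r) (X - Ξ) := by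
  obtain ⟨t, x⟩ := X
  obtain ⟨τ, ξ⟩ := Ξ
  rcases le_or_gt t τ with h | h
  · have hz : ∀ P : ℝ × ℝ, gk C s ((t, x) - P) * gk C r (P - (τ, ξ)) = 0 := by
      intro P
      rcases le_or_gt t P.1 with h' | h'
      · rw [gk_of_nonpos (p := (t, x) - P) (by simp; linarith), zero_mul]
      · rw [gk_of_nonpos (p := P - (τ, ξ)) (by simp; linarith), mul_zero]
    simp only [hz, integral_zero]
    exact ⟨integrable_zero _ _ _, (gk_of_nonpos (by simp; linarith)).symm⟩
  have hd : 0 < t - τ := by linarith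
  have hmeas : Measurable (fun P : ℝ × ℝ => gk C s ((t, x) - P) * gk C r (P - (τ, ξ))) := by
    refine Measurable.mul ((measurable_gk _ _).comp ?_) ((measurable_gk _ _).comp ?_) <;> fun_prop
  obtain ⟨bi, be⟩ := integral_betaPDFReal hr hs
  have hI : Integrable (fun P : ℝ × ℝ => gk C s ((t, x) - P) * gk C r (P - (τ, ξ))) := by
    rw [Measure.volume_eq_prod, integrable_prod_iff hmeas.aestronglyMeasurable]
    refine ⟨Eventually.of_forall fun σ => (gk_inner hC hs hr h x ξ σ).1, ?_⟩
    have : (fun σ : ℝ => ∫ y : ℝ, ‖gk C s ((t, x) - (σ, y)) * gk C r ((σ, y) - (τ, ξ))‖) =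
        fun σ => gk C (s + r) ((t, x) - (τ, ξ)) * (t - τ)⁻¹ *
        ProbabilityTheory.betaPDFReal r s ((σ - τ) / (t - τ)) := by
      funext σ
      rw [← (gk_inner hC hs hr h x ξ σ).2]
      congr 1
      funext y
      exact Real.norm_of_nonneg (mul_nonneg (gk_nonneg hs _) (gk_nonneg hr _))
    rw [this]
    exact ((bi.comp_div hd.ne').comp_sub_right τ).const_mul _
  refine ⟨hI, ?_⟩
  rw [Measure.volume_eq_prod] at hI ⊢
  rw [integral_prod _ hI]
  simp only [(gk_inner hC hs hr h x ξ _).2]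
  rw [integral_const_mul, integral_sub_right_eq_self
    (fun σ => ProbabilityTheory.betaPDFReal r s (σ / (t - τ))) τ,
    Measure.integral_comp_div (fun u => ProbabilityTheory.betaPDFReal r s u), be]
  rw [abs_of_pos hd]
  simp
  field_simp
end

/-! ### Iterated kernels and the Levi series -/

noncomputable section

/-- The iterated kernels `κ, κ ⋆ κ, κ ⋆ κ ⋆ κ, …` over space-time, the last variable of the left
factor being integrated against the first variable of the right one. -/
def kit (κ : ℝ × ℝ → ℝ × ℝ → ℝ) : ℕ → ℝ × ℝ → ℝ × ℝ → ℝ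
  | 0 => κ
  | m + 1 => fun X Ξ => ∫ P, κ X P * kit κ m P Ξ

lemma measurable_kit {κ : ℝ × ℝ → ℝ × ℝ → ℝ} (hm : Measurable (Function.uncurry κ)) (m : ℕ) :
    Measurable (Function.uncurry (kit κ m)) := by
  induction m with
  | zero => exact hm
  | succ m ih =>
    have : StronglyMeasurable (fun q : ((ℝ × ℝ) × (ℝ × ℝ)) × (ℝ × ℝ) =>
        κ q.1.1 q.2 * kit κ m q.2 q.1.2) := by
      apply Measurable.stronglyMeasurable
      refine Measurable.mul ?_ ?_
      · exact hm.comp (f := fun q : ((ℝ × ℝ) × (ℝ × ℝ)) × (ℝ × ℝ) => (q.1.1, q.2)) (by fun_prop)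
      · exact ih.comp (f := fun q : ((ℝ × ℝ) × (ℝ × ℝ)) × (ℝ × ℝ) => (q.2, q.1.2)) (by fun_prop)
    exact (this.integral_prod_right' (ν := volume)).measurable

lemma abs_mul_le_gk {C s r M N u v : ℝ} (hM : 0 ≤ M) (hs : 0 < s) {X P Ξ : ℝ × ℝ}
    (hu : |u| ≤ M * gk C s (X - P)) (hv : |v| ≤ N * gk C r (P - Ξ)) :
    ‖u * v‖ ≤ M * N * (gk C s (X - P) * gk C r (P - Ξ)) := by
  rw [Real.norm_eq_abs, abs_mul]
  calc |u| * |v| ≤ (M * gk C s (X - P)) * (N * gk C r (P - Ξ)) :=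
        mul_le_mul hu hv (abs_nonneg _) (mul_nonneg hM (gk_nonneg hs _))
    _ = _ := by ring

section
variable {C s M : ℝ} {κ κ' : ℝ × ℝ → ℝ × ℝ → ℝ}

/-- By the semigroup law, the iterates of a kernel dominated by `gk C s` are dominated by
`gk C (s + m s)`. -/
lemma kit_bound (hC : 0 < C) (hs : 0 < s) (hM : 0 ≤ M)
    (hb : ∀ X Ξ, |κ X Ξ| ≤ M * gk C s (X - Ξ)) (m : ℕ) (X Ξ : ℝ × ℝ) :
    |kit κ m X Ξ| ≤ M ^ (m + 1) * gk C (s + m * s) (X - Ξ) := by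
  induction m generalizing X Ξ with
  | zero => simpa [kit] using hb X Ξ
  | succ m ih =>
    have hms : 0 < s + m * s := by positivity
    obtain ⟨h1, h2⟩ := gk_conv hC hs hms X Ξ
    calc |kit κ (m + 1) X Ξ| = ‖∫ P, κ X P * kit κ m P Ξ‖ := rfl
      _ ≤ ∫ P, M * M ^ (m + 1) * (gk C s (X - P) * gk C (s + m * s) (P - Ξ)) :=
          norm_integral_le_of_norm_le (h1.const_mul _)
            (Eventually.of_forall fun P => abs_mul_le_gk hM hs (hb X P) (ih P Ξ))
      _ = _ := by
          rw [integral_const_mul, h2]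
          push_cast
          ring_nf

lemma kit_integrable (hC : 0 < C) (hs : 0 < s) (hM : 0 ≤ M)
    (hm : Measurable (Function.uncurry κ)) (hm' : Measurable (Function.uncurry κ'))
    (hb : ∀ X Ξ, |κ X Ξ| ≤ M * gk C s (X - Ξ)) (hb' : ∀ X Ξ, |κ' X Ξ| ≤ M * gk C s (X - Ξ))
    (m : ℕ) (X Ξ : ℝ × ℝ) :
    Integrable (fun P => κ' X P * kit κ m P Ξ) := by
  have hms : 0 < s + m * s := by positivity
  obtain ⟨h1, h2⟩ := gk_conv hC hs hms X Ξ
  refine (h1.const_mul (M * M ^ (m + 1))).mono' ?_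
    (Eventually.of_forall fun P => abs_mul_le_gk hM hs (hb' X P) (kit_bound hC hs hM hb m P Ξ))
  apply Measurable.aestronglyMeasurable
  refine Measurable.mul ?_ ?_
  · exact hm'.comp (f := fun P => (X, P)) (by fun_prop)
  · exact (measurable_kit hm m).comp (f := fun P => (P, Ξ)) (by fun_prop)

/-- Stability of the iterated kernels: the telescoping
`κ ⋆ k_m - κ' ⋆ k'_m = (κ - κ') ⋆ k_m + κ' ⋆ (k_m - k'_m)` costs a factor linear in `m`. -/
lemma kit_diff (hC : 0 < C) (hs : 0 < s) (hM : 0 ≤ M)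
    (hm : Measurable (Function.uncurry κ)) (hm' : Measurable (Function.uncurry κ'))
    (hb : ∀ X Ξ, |κ X Ξ| ≤ M * gk C s (X - Ξ)) (hb' : ∀ X Ξ, |κ' X Ξ| ≤ M * gk C s (X - Ξ))
    {d : ℝ} (hd : 0 ≤ d) (hdiff : ∀ X Ξ, |κ X Ξ - κ' X Ξ| ≤ (M * d) * gk C s (X - Ξ))
    (m : ℕ) (X Ξ : ℝ × ℝ) :
    |kit κ m X Ξ - kit κ' m X Ξ| ≤ ((m + 1) * M ^ (m + 1) * d) * gk C (s + m * s) (X - Ξ) := by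
  induction m generalizing X Ξ with
  | zero => simpa [kit] using hdiff X Ξ
  | succ m ih =>
    have hms : 0 < s + m * s := by positivity
    obtain ⟨h1, h2⟩ := gk_conv hC hs hms X Ξ
    have e : kit κ (m + 1) X Ξ - kit κ' (m + 1) X Ξ =
        ∫ P, ((κ X P - κ' X P) * kit κ m P Ξ + κ' X P * (kit κ m P Ξ - kit κ' m P Ξ)) := by
      change (∫ P, κ X P * kit κ m P Ξ) - (∫ P, κ' X P * kit κ' m P Ξ) = _
      rw [← integral_sub (kit_integrable hC hs hM hm hm hb hb m X Ξ)
        (kit_integrable hC hs hM hm' hm' hb' hb' m X Ξ)]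
      congr 1
      funext P
      ring
    rw [e, ← Real.norm_eq_abs]
    calc _ ≤ ∫ P, (M * d * M ^ (m + 1) + M * ((m + 1) * M ^ (m + 1) * d)) *
            (gk C s (X - P) * gk C (s + m * s) (P - Ξ)) := by
          refine norm_integral_le_of_norm_le (h1.const_mul _) (Eventually.of_forall fun P => ?_)
          refine (norm_add_le _ _).trans ?_
          rw [add_mul]
          exact add_le_add
            (abs_mul_le_gk (by positivity) hs (hdiff X P) (kit_bound hC hs hM hb m P Ξ))
            (abs_mul_le_gk hM hs (hb' X P) (ih P Ξ))
      _ = _ := by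
          rw [integral_const_mul, h2]
          push_cast
          ring_nf

/-- A modulus of continuity of `κ` in its first variable passes to the iterated kernels. -/
lemma kit_hol (hC : 0 < C) (hs : 0 < s) (hM : 0 ≤ M)
    (hm : Measurable (Function.uncurry κ)) (hb : ∀ X Ξ, |κ X Ξ| ≤ M * gk C s (X - Ξ))
    {s' H : ℝ} (hs' : 0 < s') (hH : 0 ≤ H) {X Y : ℝ × ℝ}
    (hdiff : ∀ P, |κ X P - κ Y P| ≤ (M * H) * (gk C s' (X - P) + gk C s' (Y - P)))
    (m : ℕ) (Ξ : ℝ × ℝ) :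
    |kit κ m X Ξ - kit κ m Y Ξ| ≤
      (M ^ (m + 1) * H) * (gk C (s' + m * s) (X - Ξ) + gk C (s' + m * s) (Y - Ξ)) := by
  cases m with
  | zero => simpa [kit] using hdiff Ξ
  | succ m =>
    have hms : 0 < s + m * s := by positivity
    obtain ⟨h1, h2⟩ := gk_conv hC hs' hms X Ξ
    obtain ⟨h3, h4⟩ := gk_conv hC hs' hms Y Ξ
    have e : kit κ (m + 1) X Ξ - kit κ (m + 1) Y Ξ =
        ∫ P, (κ X P - κ Y P) * kit κ m P Ξ := by
      change (∫ P, κ X P * kit κ m P Ξ) - (∫ P, κ Y P * kit κ m P Ξ) = _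
      rw [← integral_sub (kit_integrable hC hs hM hm hm hb hb m X Ξ)
        (kit_integrable hC hs hM hm hm hb hb m Y Ξ)]
      congr 1
      funext P
      ring
    rw [e, ← Real.norm_eq_abs]
    calc _ ≤ ∫ P, (M * H * M ^ (m + 1)) *
            (gk C s' (X - P) * gk C (s + m * s) (P - Ξ) +
              gk C s' (Y - P) * gk C (s + m * s) (P - Ξ)) := by
          refine norm_integral_le_of_norm_le ((h1.add h3).const_mul _)
            (Eventually.of_forall fun P => ?_)
          rw [Real.norm_eq_abs, abs_mul]
          calc _ ≤ ((M * H) * (gk C s' (X - P) + gk C s' (Y - P))) *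
                (M ^ (m + 1) * gk C (s + m * s) (P - Ξ)) :=
                mul_le_mul (hdiff P) (kit_bound hC hs hM hb m P Ξ) (abs_nonneg _)
                  (mul_nonneg (by positivity)
                    (add_nonneg (gk_nonneg hs' _) (gk_nonneg hs' _)))
            _ = _ := by ring
      _ = _ := by
          rw [integral_const_mul, integral_add h1 h3, h2, h4]
          push_cast
          ring_nf
end

/-- `Γ` eventually beats every geometric sequence: restrict Euler's integral to `[L, L + 1]`. -/
lemma Gamma_ge {z L : ℝ} (hz : 0 < z) (hL : 0 < L) :
    Real.exp (-(L + 1)) * L ^ z / (L + 1) ≤ Real.Gamma z := by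
  rw [Real.Gamma_eq_integral hz]
  have hconv := Real.GammaIntegral_convergent hz
  have hsub : Set.Ioc L (L + 1) ⊆ Set.Ioi (0 : ℝ) := fun u hu => hL.trans hu.1
  calc Real.exp (-(L + 1)) * L ^ z / (L + 1)
      = ∫ u in Set.Ioc L (L + 1), Real.exp (-(L + 1)) * L ^ z / (L + 1) := by simp
    _ ≤ ∫ u in Set.Ioc L (L + 1), Real.exp (-u) * u ^ (z - 1) := by
        refine setIntegral_mono_on (by simp) (hconv.mono_set hsub) measurableSet_Ioc ?_
        intro u hu
        have hu0 : 0 < u := hsub hu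
        rw [Real.rpow_sub_one hu0.ne', mul_div_assoc]
        have h1 : L ^ z ≤ u ^ z := Real.rpow_le_rpow hL.le hu.1.le hz.le
        have h2 : Real.exp (-(L + 1)) ≤ Real.exp (-u) := Real.exp_le_exp.mpr (by linarith [hu.2])
        have h3 := hu.2
        gcongr
    _ ≤ ∫ u in Set.Ioi (0 : ℝ), Real.exp (-u) * u ^ (z - 1) := by
        refine setIntegral_mono_set hconv ?_ (Eventually.of_forall hsub)
        refine (ae_restrict_iff' measurableSet_Ioi).mpr (Eventually.of_forall fun u hu => ?_)
        have : (0 : ℝ) < u := hu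
        simp only [Pi.zero_apply]
        positivity

/-- Convergence of the Mittag-Leffler type series, from the superexponential growth of `Γ`. -/
lemma summable_mittag {A s₀ s : ℝ} (hA : 0 ≤ A) (hs₀ : 0 < s₀) (hs : 0 < s) :
    Summable (fun m : ℕ => (m + 1) * A ^ m / Real.Gamma (s₀ + m * s)) := by
  -- `L` is chosen so that `L ^ s = 2 A + 1` dominates `A` with ratio at most `1 / 2`.
  set L : ℝ := (2 * A + 1) ^ (1 / s) with hLdef
  have hL : 0 < L := by positivity
  have hLs : L ^ s = 2 * A + 1 := by
    rw [hLdef, ← Real.rpow_mul (by positivity), one_div_mul_cancel hs.ne', Real.rpow_one]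
  have hsum : Summable (fun m : ℕ => ((m : ℝ) + 1) * (1 / 2) ^ m) := by
    have h1 := summable_pow_mul_geometric_of_norm_lt_one 1 (r := (1 / 2 : ℝ)) (by norm_num)
    have h2 := summable_geometric_of_lt_one (r := (1 / 2 : ℝ)) (by norm_num) (by norm_num)
    refine (h1.add h2).congr fun m => ?_
    ring
  refine Summable.of_nonneg_of_le (fun m => ?_) (fun m => ?_)
    (hsum.mul_left ((L + 1) / (Real.exp (-(L + 1)) * L ^ s₀)))
  · have := Real.Gamma_pos_of_pos (show 0 < s₀ + m * s by positivity)
    positivity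
  · have h := Gamma_ge (show 0 < s₀ + m * s by positivity) hL
    have e : L ^ (s₀ + m * s) = L ^ s₀ * (2 * A + 1) ^ m := by
      rw [Real.rpow_add hL, mul_comm (m : ℝ) s, Real.rpow_mul hL.le, hLs, Real.rpow_natCast]
    rw [e] at h
    have hA2 : A ^ m ≤ (1 / 2) ^ m * (2 * A + 1) ^ m := by
      rw [← mul_pow]
      exact pow_le_pow_left₀ hA (by linarith) m
    have hpos : 0 < Real.exp (-(L + 1)) * (L ^ s₀ * (2 * A + 1) ^ m) / (L + 1) := by positivity
    calc (m + 1) * A ^ m / Real.Gamma (s₀ + m * s)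
        ≤ (m + 1) * ((1 / 2) ^ m * (2 * A + 1) ^ m) /
          (Real.exp (-(L + 1)) * (L ^ s₀ * (2 * A + 1) ^ m) / (L + 1)) := by
          gcongr
      _ = _ := by
          have : (2 * A + 1) ^ m ≠ 0 := by positivity
          field_simp

/-- The Levi series is dominated by its first term, uniformly for times in `(0, T]`. -/
lemma tsum_gk {C s₀ s M T : ℝ} (hC : 0 < C) (hs₀ : 0 < s₀) (hs : 0 < s) (hM : 0 ≤ M)
    (hT : 0 < T) :
    ∃ S : ℝ, 0 < S ∧ ∀ p : ℝ × ℝ, 0 < p.1 → p.1 ≤ T →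
      Summable (fun m : ℕ => ((m + 1) * M ^ (m + 1)) * gk C (s₀ + m * s) p) ∧
      ∑' m : ℕ, ((m + 1) * M ^ (m + 1)) * gk C (s₀ + m * s) p ≤
        S * (p.1 ^ (s₀ - 3 / 2) * Real.exp (-C * p.2 ^ 2 / p.1)) := by
  have hsum := summable_mittag (A := M * T ^ s) (by positivity) hs₀ hs
  have hq : 0 < √(Real.pi / C) := by have := Real.pi_pos; positivity
  set f : ℕ → ℝ := fun m => (m + 1) * (M * T ^ s) ^ m / Real.Gamma (s₀ + m * s) with hf
  have hf0 : ∀ m, 0 ≤ f m := fun m => by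
    have := Real.Gamma_pos_of_pos (show 0 < s₀ + m * s by positivity)
    simp only [hf]
    positivity
  refine ⟨M / √(Real.pi / C) * ∑' m, f m + 1, ?_, ?_⟩
  · have : 0 ≤ ∑' m, f m := tsum_nonneg hf0
    positivity
  rintro ⟨t, x⟩ ht htT
  simp only at ht htT ⊢
  set W : ℝ := t ^ (s₀ - 3 / 2) * Real.exp (-C * x ^ 2 / t) with hW
  have hW0 : 0 ≤ W := by positivity
  have hle : ∀ m : ℕ, ((m + 1) * M ^ (m + 1)) * gk C (s₀ + m * s) (t, x) ≤
      (M / √(Real.pi / C) * W) * f m := by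
    intro m
    have hg := Real.Gamma_pos_of_pos (show 0 < s₀ + m * s by positivity)
    have e : t ^ (s₀ + m * s - 3 / 2) = t ^ (s₀ - 3 / 2) * (t ^ s) ^ m := by
      rw [← Real.rpow_natCast, ← Real.rpow_mul ht.le, ← Real.rpow_add ht]
      congr 1
      ring
    have hts : (t ^ s) ^ m ≤ (T ^ s) ^ m :=
      pow_le_pow_left₀ (by positivity) (Real.rpow_le_rpow ht.le htT hs.le) m
    calc _ = (M / √(Real.pi / C) * W) *
          ((m + 1) * (M ^ m * (t ^ s) ^ m) / Real.Gamma (s₀ + m * s)) := by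
          simp only [gk, ht, if_true, e, hW]
          field_simp
          ring
      _ ≤ _ := by
          simp only [hf, mul_pow]
          gcongr
  have hs1 : Summable (fun m : ℕ => ((m + 1) * M ^ (m + 1)) * gk C (s₀ + m * s) (t, x)) :=
    Summable.of_nonneg_of_le (fun m => mul_nonneg (by positivity)
      (gk_nonneg (by positivity) _)) hle (hsum.mul_left _)
  refine ⟨hs1, ?_⟩
  calc _ ≤ ∑' m, (M / √(Real.pi / C) * W) * f m := hs1.tsum_le_tsum hle (hsum.mul_left _)
    _ = (M / √(Real.pi / C) * ∑' m, f m) * W := by rw [tsum_mul_left]; ring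
    _ ≤ _ := by gcongr; linarith
end

/-! ### Gaussian profiles -/

noncomputable section

/-- Gaussian profile bounds for `q A u`, with diffusion parameter `A ∈ [lam, R]` and rescaled space
variable `u`: `q`, its Lipschitz quotient in `u` and its Lipschitz quotient in `A` are bounded by
`N` times Gaussians of rate `c`. -/
structure Prof (lam R N c : ℝ) (q : ℝ → ℝ → ℝ) : Prop where
  bd : ∀ A u, lam ≤ A → A ≤ R → |q A u| ≤ N * Real.exp (-c * u ^ 2)
  lip : ∀ A u w, lam ≤ A → A ≤ R → |q A u - q A w| ≤
    N * |u - w| * (Real.exp (-c * u ^ 2) + Real.exp (-c * w ^ 2))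
  par : ∀ A B u, lam ≤ A → A ≤ R → lam ≤ B → B ≤ R → |q A u - q B u| ≤
    N * |A - B| * Real.exp (-c * u ^ 2)

/-- `q` satisfies the Gaussian profile bounds for some constants. -/
def IsProf (lam R : ℝ) (q : ℝ → ℝ → ℝ) : Prop := ∃ N c, 0 < N ∧ 0 < c ∧ Prof lam R N c q

lemma exp_sq_mono {c C : ℝ} (h : C ≤ c) (u : ℝ) :
    Real.exp (-c * u ^ 2) ≤ Real.exp (-C * u ^ 2) := by
  apply Real.exp_le_exp.mpr
  nlinarith [sq_nonneg u]

/-- Polynomial weights are absorbed by lowering the Gaussian rate. -/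
lemma one_add_sq_mul_exp {c C : ℝ} (hc : 0 < c) (hC : C ≤ c / 2) (u : ℝ) :
    (1 + u ^ 2) * Real.exp (-c * u ^ 2) ≤ (1 + 2 / c) * Real.exp (-C * u ^ 2) := by
  have h1 : 1 + u ^ 2 ≤ (1 + 2 / c) * Real.exp (c / 2 * u ^ 2) := by
    have h2 := Real.add_one_le_exp (c / 2 * u ^ 2)
    calc 1 + u ^ 2 ≤ (1 + 2 / c) * (c / 2 * u ^ 2 + 1) := by
          have : (1 + 2 / c) * (c / 2 * u ^ 2 + 1) = 1 + u ^ 2 + (c / 2 * u ^ 2 + 2 / c) := by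
            field_simp; ring
          rw [this]
          have : 0 ≤ c / 2 * u ^ 2 + 2 / c := by positivity
          linarith
      _ ≤ _ := by gcongr
  calc (1 + u ^ 2) * Real.exp (-c * u ^ 2)
      ≤ ((1 + 2 / c) * Real.exp (c / 2 * u ^ 2)) * Real.exp (-c * u ^ 2) := by gcongr
    _ = (1 + 2 / c) * Real.exp (-(c / 2) * u ^ 2) := by
        rw [mul_assoc, ← Real.exp_add]
        congr 2
        ring
    _ ≤ _ := by
        gcongr ?_ * ?_
        exact exp_sq_mono hC u

lemma abs_weight_mul_exp {c C : ℝ} (hc : 0 < c) (hC : C ≤ c / 2) {u p : ℝ} (hp : p ≤ 2 + |u|) :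
    p * Real.exp (-c * u ^ 2) ≤ 3 * (1 + 2 / c) * Real.exp (-C * u ^ 2) := by
  have h := one_add_sq_mul_exp hc hC u
  have hp' : p ≤ 3 * (1 + u ^ 2) := by
    nlinarith [sq_nonneg (|u| - 1), sq_abs u, abs_nonneg u]
  calc p * Real.exp (-c * u ^ 2) ≤ 3 * (1 + u ^ 2) * Real.exp (-c * u ^ 2) := by gcongr
    _ = 3 * ((1 + u ^ 2) * Real.exp (-c * u ^ 2)) := by ring
    _ ≤ 3 * ((1 + 2 / c) * Real.exp (-C * u ^ 2)) := by gcongr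
    _ = _ := by ring

lemma Prof.mono {lam R N c N' c' : ℝ} {q : ℝ → ℝ → ℝ} (h : Prof lam R N c q) (hN0 : 0 ≤ N)
    (hN : N ≤ N') (hc : c' ≤ c) : Prof lam R N' c' q := by
  have hN' : 0 ≤ N' := hN0.trans hN
  have he := exp_sq_mono hc
  refine ⟨fun A u h1 h2 => (h.bd A u h1 h2).trans ?_,
    fun A u w h1 h2 => (h.lip A u w h1 h2).trans ?_,
    fun A B u h1 h2 h3 h4 => (h.par A B u h1 h2 h3 h4).trans ?_⟩
  · exact mul_le_mul hN (he u) (Real.exp_pos _).le hN'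
  · exact mul_le_mul (by gcongr) (add_le_add (he u) (he w)) (by positivity) (by positivity)
  · exact mul_le_mul (by gcongr) (he u) (by positivity) (by positivity)

/-- The Lipschitz bound in `u` need only be checked at distance at most one. -/
lemma lip_of_near {N c : ℝ} (hN : 0 < N) {f : ℝ → ℝ} (hb : ∀ u, |f u| ≤ N * Real.exp (-c * u ^ 2))
    (hl : ∀ u w, |u - w| ≤ 1 → |f u - f w| ≤
      N * |u - w| * (Real.exp (-c * u ^ 2) + Real.exp (-c * w ^ 2))) (u w : ℝ) :
    |f u - f w| ≤ N * |u - w| * (Real.exp (-c * u ^ 2) + Real.exp (-c * w ^ 2)) := by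
  rcases le_or_gt (|u - w|) 1 with h | h
  · exact hl u w h
  · calc |f u - f w| ≤ |f u| + |f w| := abs_sub _ _
      _ ≤ N * 1 * (Real.exp (-c * u ^ 2) + Real.exp (-c * w ^ 2)) := by
          have := hb u
          have := hb w
          linarith
      _ ≤ _ := by gcongr

lemma IsProf.add {lam R : ℝ} {q r : ℝ → ℝ → ℝ} (hq : IsProf lam R q) (hr : IsProf lam R r) :
    IsProf lam R (fun A u => q A u + r A u) := by
  obtain ⟨N, c, hN, hc, h⟩ := hq
  obtain ⟨N', c', hN', hc', h'⟩ := hr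
  have k := h.mono hN.le le_rfl (min_le_left c c')
  have k' := h'.mono hN'.le le_rfl (min_le_right c c')
  refine ⟨N + N', min c c', by positivity, lt_min hc hc', ?_, ?_, ?_⟩
  · intro A u h1 h2
    refine (abs_add_le _ _).trans ?_
    linarith [k.bd A u h1 h2, k'.bd A u h1 h2]
  · intro A u w h1 h2
    have e : q A u + r A u - (q A w + r A w) = (q A u - q A w) + (r A u - r A w) := by ring
    rw [e]
    refine (abs_add_le _ _).trans ?_
    linarith [k.lip A u w h1 h2, k'.lip A u w h1 h2]
  · intro A B u h1 h2 h3 h4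
    have e : q A u + r A u - (q B u + r B u) = (q A u - q B u) + (r A u - r B u) := by ring
    rw [e]
    refine (abs_add_le _ _).trans ?_
    linarith [k.par A B u h1 h2 h3 h4, k'.par A B u h1 h2 h3 h4]

lemma IsProf.mul_par {lam R : ℝ} {q : ℝ → ℝ → ℝ} (hq : IsProf lam R q) {f : ℝ → ℝ} {F : ℝ}
    (hF : 0 < F) (hf : ∀ A, lam ≤ A → |f A| ≤ F)
    (hf' : ∀ A B, lam ≤ A → lam ≤ B → |f A - f B| ≤ F * |A - B|) :
    IsProf lam R (fun A u => f A * q A u) := by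
  obtain ⟨N, c, hN, hc, h⟩ := hq
  have h2N : F * N ≤ 2 * F * N := by nlinarith [mul_pos hF hN]
  refine ⟨2 * F * N, c, by positivity, hc, ?_, ?_, ?_⟩
  · intro A u h1 h2
    rw [abs_mul]
    calc |f A| * |q A u| ≤ F * (N * Real.exp (-c * u ^ 2)) :=
          mul_le_mul (hf A h1) (h.bd A u h1 h2) (abs_nonneg _) hF.le
      _ = F * N * Real.exp (-c * u ^ 2) := by ring
      _ ≤ _ := by gcongr
  · intro A u w h1 h2
    rw [← mul_sub, abs_mul]
    calc |f A| * |q A u - q A w| ≤ F * _ :=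
          mul_le_mul (hf A h1) (h.lip A u w h1 h2) (abs_nonneg _) hF.le
      _ = F * N * |u - w| * (Real.exp (-c * u ^ 2) + Real.exp (-c * w ^ 2)) := by ring
      _ ≤ _ := by gcongr
  · intro A B u h1 h2 h3 h4
    have e : f A * q A u - f B * q B u = (f A - f B) * q A u + f B * (q A u - q B u) := by ring
    rw [e]
    refine (abs_add_le _ _).trans ?_
    rw [abs_mul, abs_mul]
    calc _ ≤ (F * |A - B|) * (N * Real.exp (-c * u ^ 2)) +
          F * (N * |A - B| * Real.exp (-c * u ^ 2)) :=
          add_le_add (mul_le_mul (hf' A B h1 h3) (h.bd A u h1 h2) (abs_nonneg _) (by positivity))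
            (mul_le_mul (hf B h3) (h.par A B u h1 h2 h3 h4) (abs_nonneg _) hF.le)
      _ = _ := by ring

/-- Multiplication by `u` preserves the profile bounds, the Gaussian rate being halved. -/
lemma IsProf.mul_var {lam R : ℝ} {q : ℝ → ℝ → ℝ} (hq : IsProf lam R q) :
    IsProf lam R (fun A u => u * q A u) := by
  obtain ⟨N, c, hN, hc, h⟩ := hq
  set k : ℝ := 3 * (1 + 2 / c) with hk
  have hk1 : 0 < k := by positivity
  have hk2 : ∀ u : ℝ, |u| * Real.exp (-c * u ^ 2) ≤ k * Real.exp (-(c / 2) * u ^ 2) := fun u =>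
    abs_weight_mul_exp hc le_rfl (by linarith)
  have hk3 : ∀ u : ℝ, Real.exp (-c * u ^ 2) ≤ Real.exp (-(c / 2) * u ^ 2) := fun u =>
    exp_sq_mono (by linarith) u
  have hb : ∀ A u, lam ≤ A → A ≤ R →
      |u * q A u| ≤ (N * (1 + k)) * Real.exp (-(c / 2) * u ^ 2) := by
    intro A u h1 h2
    rw [abs_mul]
    calc |u| * |q A u| ≤ |u| * (N * Real.exp (-c * u ^ 2)) := by
          gcongr; exact h.bd A u h1 h2
      _ = N * (|u| * Real.exp (-c * u ^ 2)) := by ring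
      _ ≤ N * (k * Real.exp (-(c / 2) * u ^ 2)) := mul_le_mul_of_nonneg_left (hk2 u) hN.le
      _ = (N * k) * Real.exp (-(c / 2) * u ^ 2) := by ring
      _ ≤ _ := by gcongr; linarith
  refine ⟨N * (1 + k), c / 2, by positivity, by positivity, hb, ?_, ?_⟩
  · intro A u w h1 h2
    refine lip_of_near (by positivity) (f := fun u => u * q A u) (fun u => hb A u h1 h2) ?_ u w
    intro u w huw
    have e : u * q A u - w * q A w = (u - w) * q A u + w * (q A u - q A w) := by ring
    rw [e]
    refine (abs_add_le _ _).trans ?_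
    rw [abs_mul, abs_mul]
    have hwu : |w| ≤ 2 + |u| := by
      have h3 := abs_sub_abs_le_abs_sub w u
      rw [abs_sub_comm] at h3
      linarith
    calc _ ≤ |u - w| * (N * Real.exp (-c * u ^ 2)) +
          |w| * (N * |u - w| * (Real.exp (-c * u ^ 2) + Real.exp (-c * w ^ 2))) := by
          gcongr
          · exact h.bd A u h1 h2
          · exact h.lip A u w h1 h2
      _ = N * |u - w| * (Real.exp (-c * u ^ 2) + |w| * Real.exp (-c * u ^ 2) +
          |w| * Real.exp (-c * w ^ 2)) := by ring
      _ ≤ N * |u - w| * (Real.exp (-(c / 2) * u ^ 2) + k * Real.exp (-(c / 2) * u ^ 2) +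
          k * Real.exp (-(c / 2) * w ^ 2)) := by
          gcongr N * |u - w| * (?_ + ?_ + ?_)
          · exact hk3 u
          · exact abs_weight_mul_exp hc le_rfl hwu
          · exact hk2 w
      _ ≤ N * |u - w| * ((1 + k) * (Real.exp (-(c / 2) * u ^ 2) +
          Real.exp (-(c / 2) * w ^ 2))) := by
          gcongr
          linarith [Real.exp_pos (-(c / 2) * w ^ 2)]
      _ = _ := by ring
  · intro A B u h1 h2 h3 h4
    rw [← mul_sub, abs_mul]
    calc _ ≤ |u| * (N * |A - B| * Real.exp (-c * u ^ 2)) := by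
          gcongr; exact h.par A B u h1 h2 h3 h4
      _ = N * |A - B| * (|u| * Real.exp (-c * u ^ 2)) := by ring
      _ ≤ N * |A - B| * (k * Real.exp (-(c / 2) * u ^ 2)) :=
          mul_le_mul_of_nonneg_left (hk2 u) (by positivity)
      _ = N * k * |A - B| * Real.exp (-(c / 2) * u ^ 2) := by ring
      _ ≤ _ := by gcongr; linarith

lemma abs_exp_neg_sub (p r : ℝ) :
    |Real.exp (-p) - Real.exp (-r)| ≤ |p - r| * (Real.exp (-p) + Real.exp (-r)) := by
  wlog h : p ≤ r generalizing p r
  · have := this r p (by linarith)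
    rw [abs_sub_comm, abs_sub_comm p r, add_comm]
    exact this
  have e : Real.exp (-r) = Real.exp (-p) * Real.exp (p - r) := by rw [← Real.exp_add]; ring_nf
  have h1 : Real.exp (-r) ≤ Real.exp (-p) := Real.exp_le_exp.mpr (by linarith)
  rw [abs_of_nonneg (by linarith), abs_of_nonpos (by linarith)]
  have h2 := Real.add_one_le_exp (p - r)
  have h3 := Real.exp_pos (-p)
  have h4 := Real.exp_pos (-r)
  have h5 : Real.exp (-p) - Real.exp (-r) ≤ -(p - r) * Real.exp (-p) := by rw [e]; nlinarith
  nlinarith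

lemma isProf_gauss {lam R : ℝ} (hlam : 0 < lam) (hR : 0 < R) :
    IsProf lam R (fun A u => Real.exp (-(u ^ 2 / (4 * A)))) := by
  set c : ℝ := 1 / (4 * R) with hcdef
  have hc : 0 < c := by positivity
  have hbase : ∀ A u, lam ≤ A → A ≤ R → Real.exp (-(u ^ 2 / (4 * A))) ≤ Real.exp (-c * u ^ 2) := by
    intro A u h1 h2
    have hA : 0 < A := by linarith
    apply Real.exp_le_exp.mpr
    rw [neg_mul, neg_le_neg_iff, hcdef, one_div_mul_eq_div]
    gcongr
  set k : ℝ := 3 * (1 + 2 / c) with hk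
  have hk1 : 0 < k := by positivity
  have hk3 : ∀ u : ℝ, Real.exp (-c * u ^ 2) ≤ Real.exp (-(c / 2) * u ^ 2) := fun u =>
    exp_sq_mono (by linarith) u
  set N : ℝ := 1 + 2 * k / (4 * lam) + 2 * k / (4 * lam ^ 2) with hN
  have hN1 : 1 ≤ N := by
    have : 0 ≤ 2 * k / (4 * lam) + 2 * k / (4 * lam ^ 2) := by positivity
    linarith
  have hN2 : 2 * k / (4 * lam) ≤ N := by
    have : 0 ≤ 1 + 2 * k / (4 * lam ^ 2) := by positivity
    linarith
  have hN3 : 2 * k / (4 * lam ^ 2) ≤ N := by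
    have : 0 ≤ 1 + 2 * k / (4 * lam) := by positivity
    linarith
  have hb : ∀ A u, lam ≤ A → A ≤ R →
      |Real.exp (-(u ^ 2 / (4 * A)))| ≤ N * Real.exp (-(c / 2) * u ^ 2) := by
    intro A u h1 h2
    rw [abs_of_pos (Real.exp_pos _)]
    calc _ ≤ 1 * Real.exp (-(c / 2) * u ^ 2) := by
          rw [one_mul]; exact (hbase A u h1 h2).trans (hk3 u)
      _ ≤ _ := by gcongr
  refine ⟨N, c / 2, by linarith, by positivity, hb, ?_, ?_⟩
  · intro A u w h1 h2
    refine lip_of_near (by linarith) (f := fun u => Real.exp (-(u ^ 2 / (4 * A))))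
      (fun u => hb A u h1 h2) ?_ u w
    intro u w huw
    have hA : 0 < A := by linarith
    refine (abs_exp_neg_sub _ _).trans ?_
    have e : |u ^ 2 / (4 * A) - w ^ 2 / (4 * A)| ≤ |u - w| * |u + w| / (4 * lam) := by
      rw [← sub_div, abs_div, abs_of_pos (show 0 < 4 * A by positivity), ← abs_mul]
      have : (u - w) * (u + w) = u ^ 2 - w ^ 2 := by ring
      rw [this]
      gcongr
    have hu : |u + w| / 2 ≤ 2 + |u| := by
      have h3 : |u + w| ≤ |u - w| + 2 * |u| := by
        have : u + w = -(u - w) + 2 * u := by ring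
        rw [this]
        refine (abs_add_le _ _).trans ?_
        rw [abs_neg, abs_mul, abs_two]
      linarith [abs_nonneg u]
    have hw : |u + w| / 2 ≤ 2 + |w| := by
      have h3 : |u + w| ≤ |u - w| + 2 * |w| := by
        have : u + w = (u - w) + 2 * w := by ring
        rw [this]
        refine (abs_add_le _ _).trans ?_
        rw [abs_mul, abs_two]
      linarith [abs_nonneg w]
    have hu' := abs_weight_mul_exp hc le_rfl hu
    have hw' := abs_weight_mul_exp hc le_rfl hw
    calc _ ≤ (|u - w| * |u + w| / (4 * lam)) *
          (Real.exp (-c * u ^ 2) + Real.exp (-c * w ^ 2)) := by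
          gcongr ?_ * (?_ + ?_)
          · exact hbase A u h1 h2
          · exact hbase A w h1 h2
      _ = |u - w| * 2 / (4 * lam) * (|u + w| / 2 * Real.exp (-c * u ^ 2) +
          |u + w| / 2 * Real.exp (-c * w ^ 2)) := by ring
      _ ≤ |u - w| * 2 / (4 * lam) * (k * Real.exp (-(c / 2) * u ^ 2) +
          k * Real.exp (-(c / 2) * w ^ 2)) := by gcongr
      _ = 2 * k / (4 * lam) * |u - w| * (Real.exp (-(c / 2) * u ^ 2) +
          Real.exp (-(c / 2) * w ^ 2)) := by ring
      _ ≤ _ := by gcongr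
  · intro A B u h1 h2 h3 h4
    have hA : 0 < A := by linarith
    have hB : 0 < B := by linarith
    refine (abs_exp_neg_sub _ _).trans ?_
    have e : |u ^ 2 / (4 * A) - u ^ 2 / (4 * B)| ≤ |A - B| * u ^ 2 / (4 * lam ^ 2) := by
      have : u ^ 2 / (4 * A) - u ^ 2 / (4 * B) = (B - A) * u ^ 2 / (4 * (A * B)) := by
        field_simp
      rw [this, abs_div, abs_mul, abs_of_nonneg (sq_nonneg u), abs_sub_comm,
        abs_of_pos (show 0 < 4 * (A * B) by positivity), sq lam]
      gcongr
    have hu' := one_add_sq_mul_exp hc le_rfl u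
    calc _ ≤ (|A - B| * u ^ 2 / (4 * lam ^ 2)) *
          (Real.exp (-c * u ^ 2) + Real.exp (-c * u ^ 2)) := by
          gcongr ?_ * (?_ + ?_)
          · exact hbase A u h1 h2
          · exact hbase B u h3 h4
      _ = |A - B| * 2 / (4 * lam ^ 2) * (u ^ 2 * Real.exp (-c * u ^ 2)) := by ring
      _ ≤ |A - B| * 2 / (4 * lam ^ 2) * (k * Real.exp (-(c / 2) * u ^ 2)) := by
          refine mul_le_mul_of_nonneg_left ?_ (by positivity)
          have e1 := Real.exp_pos (-c * u ^ 2)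
          have e2 : 0 < (1 + 2 / c) * Real.exp (-(c / 2) * u ^ 2) := by positivity
          rw [hk]
          nlinarith
      _ = 2 * k / (4 * lam ^ 2) * |A - B| * Real.exp (-(c / 2) * u ^ 2) := by ring
      _ ≤ _ := by gcongr

/-- The heat kernel at unit time with diffusivity `A`. -/
def q0 (A u : ℝ) : ℝ := (√(4 * Real.pi * A))⁻¹ * Real.exp (-(u ^ 2 / (4 * A)))

/-- The first derivative of `q0` in `u`. -/
def q1 (A u : ℝ) : ℝ := -(1 / (2 * A)) * (u * q0 A u)

/-- The second derivative of `q0` in `u`. -/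
def q2 (A u : ℝ) : ℝ := -(1 / (2 * A)) * (u * q1 A u) + -(1 / (2 * A)) * q0 A u

lemma isProf_q0 {lam R : ℝ} (hlam : 0 < lam) (hR : 0 < R) : IsProf lam R q0 := by
  set r : ℝ := √(4 * Real.pi * lam) with hr
  have hr0 : 0 < r := by have := Real.pi_pos; positivity
  refine (isProf_gauss hlam hR).mul_par (f := fun A => (√(4 * Real.pi * A))⁻¹)
    (F := r⁻¹ + 4 * Real.pi / (r * (r * r))) (by have := Real.pi_pos; positivity) ?_ ?_
  · intro A hA
    rw [abs_of_nonneg (by positivity)]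
    have h1 : r ≤ √(4 * Real.pi * A) := Real.sqrt_le_sqrt (by gcongr)
    have h2 : 0 ≤ 4 * Real.pi / (r * (r * r)) := by have := Real.pi_pos; positivity
    have h3 : (√(4 * Real.pi * A))⁻¹ ≤ r⁻¹ := by gcongr
    linarith
  · intro A B hA hB
    have hπ := Real.pi_pos
    have h1 : r ≤ √(4 * Real.pi * A) := Real.sqrt_le_sqrt (by gcongr)
    have h2 : r ≤ √(4 * Real.pi * B) := Real.sqrt_le_sqrt (by gcongr)
    have h3 : √(4 * Real.pi * A) ^ 2 = 4 * Real.pi * A := Real.sq_sqrt (by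
      have : 0 < A := by linarith
      positivity)
    have h4 : √(4 * Real.pi * B) ^ 2 = 4 * Real.pi * B := Real.sq_sqrt (by
      have : 0 < B := by linarith
      positivity)
    set U := √(4 * Real.pi * A)
    set V := √(4 * Real.pi * B)
    have hU : 0 < U := by linarith
    have hV : 0 < V := by linarith
    have e : U⁻¹ - V⁻¹ = 4 * Real.pi * (B - A) / ((U + V) * (U * V)) := by
      field_simp
      linear_combination h4 - h3
    rw [e, abs_div, abs_mul, abs_of_pos (show 0 < (U + V) * (U * V) by positivity),
      abs_of_pos (show 0 < 4 * Real.pi by positivity), abs_sub_comm]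
    calc _ ≤ 4 * Real.pi * |A - B| / (r * (r * r)) := by
          gcongr
          linarith
      _ = 0 + 4 * Real.pi / (r * (r * r)) * |A - B| := by ring
      _ ≤ r⁻¹ * |A - B| + 4 * Real.pi / (r * (r * r)) * |A - B| := by gcongr; positivity
      _ = _ := by ring

lemma IsProf.mul_inv {lam R : ℝ} (hlam : 0 < lam) {q : ℝ → ℝ → ℝ} (h : IsProf lam R q) :
    IsProf lam R (fun A u => -(1 / (2 * A)) * q A u) := by
  refine h.mul_par (f := fun A => -(1 / (2 * A))) (F := 1 / (2 * lam) + 1 / (2 * (lam * lam)))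
    (by positivity) ?_ ?_
  · intro A hA
    have hA0 : 0 < A := by linarith
    rw [abs_neg, abs_of_pos (by positivity)]
    have h2 : 0 ≤ 1 / (2 * (lam * lam)) := by positivity
    have h3 : 1 / (2 * A) ≤ 1 / (2 * lam) := by gcongr
    linarith
  · intro A B hA hB
    have hA0 : 0 < A := by linarith
    have hB0 : 0 < B := by linarith
    have e : -(1 / (2 * A)) - -(1 / (2 * B)) = (A - B) / (2 * (A * B)) := by
      field_simp
      ring
    rw [e, abs_div, abs_of_pos (show 0 < 2 * (A * B) by positivity)]
    calc _ ≤ |A - B| / (2 * (lam * lam)) := by gcongr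
      _ = 0 + 1 / (2 * (lam * lam)) * |A - B| := by ring
      _ ≤ 1 / (2 * lam) * |A - B| + 1 / (2 * (lam * lam)) * |A - B| := by gcongr; positivity
      _ = _ := by ring

lemma isProf_q1 {lam R : ℝ} (hlam : 0 < lam) (hR : 0 < R) : IsProf lam R q1 :=
  (isProf_q0 hlam hR).mul_var.mul_inv hlam

lemma isProf_q2 {lam R : ℝ} (hlam : 0 < lam) (hR : 0 < R) : IsProf lam R q2 :=
  ((isProf_q1 hlam hR).mul_var.mul_inv hlam).add ((isProf_q0 hlam hR).mul_inv hlam)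

/-- The linear growth of the weight is absorbed by lowering the Gaussian rate to `C ≤ c / 2`. -/
lemma prof_bd {lam R N c C W A u ω : ℝ} {q : ℝ → ℝ → ℝ} (h : Prof lam R N c q) (hN : 0 < N)
    (hc : 0 < c) (hC : C ≤ c / 2) (hW : 0 ≤ W) (h1 : lam ≤ A) (h2 : A ≤ R)
    (hω : |ω| ≤ W * (1 + |u|)) :
    |ω * q A u| ≤ W * N * (3 * (1 + 2 / c)) * Real.exp (-C * u ^ 2) := by
  rw [abs_mul]
  calc _ ≤ (W * (1 + |u|)) * (N * Real.exp (-c * u ^ 2)) := by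
        gcongr; exact h.bd A u h1 h2
    _ = W * N * ((1 + |u|) * Real.exp (-c * u ^ 2)) := by ring
    _ ≤ W * N * (3 * (1 + 2 / c) * Real.exp (-C * u ^ 2)) := by
        refine mul_le_mul_of_nonneg_left (abs_weight_mul_exp hc hC ?_) (by positivity)
        linarith
    _ = _ := by ring

/-- Stability of a weighted profile under a perturbation of size `d` of both the weight and the
diffusivity. -/
lemma prof_diff {lam R N c C W A A' u ω ω' d : ℝ} {q : ℝ → ℝ → ℝ} (h : Prof lam R N c q)
    (hN : 0 < N) (hc : 0 < c) (hC : C ≤ c / 2) (hW : 0 ≤ W) (h1 : lam ≤ A) (h2 : A ≤ R)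
    (h1' : lam ≤ A') (h2' : A' ≤ R) (hA : |A - A'| ≤ d)
    (hω' : |ω'| ≤ W * (1 + |u|)) (hω : |ω - ω'| ≤ W * d * (1 + |u|)) :
    |ω * q A u - ω' * q A' u| ≤
      2 * (W * N * (3 * (1 + 2 / c))) * d * Real.exp (-C * u ^ 2) := by
  have hd : 0 ≤ d := (abs_nonneg _).trans hA
  have e : ω * q A u - ω' * q A' u = (ω - ω') * q A u + ω' * (q A u - q A' u) := by ring
  rw [e]
  refine (abs_add_le _ _).trans ?_
  rw [abs_mul, abs_mul]
  calc _ ≤ (W * d * (1 + |u|)) * (N * Real.exp (-c * u ^ 2)) +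
        (W * (1 + |u|)) * (N * d * Real.exp (-c * u ^ 2)) := by
        gcongr
        · exact h.bd A u h1 h2
        · refine (h.par A A' u h1 h2 h1' h2').trans ?_
          gcongr
    _ = 2 * (W * N) * d * ((1 + |u|) * Real.exp (-c * u ^ 2)) := by ring
    _ ≤ 2 * (W * N) * d * (3 * (1 + 2 / c) * Real.exp (-C * u ^ 2)) := by
        refine mul_le_mul_of_nonneg_left (abs_weight_mul_exp hc hC ?_) (by positivity)
        linarith
    _ = _ := by ring

/-- Hölder continuity in `u` of a weighted profile. At distance at most one the increments of the
weight and of the profile are used; beyond that the size bound suffices. -/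
lemma prof_hol {lam R N c C W A u v ω ω' α γ : ℝ} {q : ℝ → ℝ → ℝ} (h : Prof lam R N c q)
    (hN : 0 < N) (hc : 0 < c) (hC : C ≤ c / 2) (hW : 0 ≤ W) (h1 : lam ≤ A) (h2 : A ≤ R)
    (hγ : 0 < γ) (hγα : γ < α) (hα : α ≤ 1)
    (hω : |ω| ≤ W * (1 + |u|)) (hω' : |ω'| ≤ W * (1 + |v|))
    (hd : |ω - ω'| ≤ W * |u - v| ^ α) :
    |ω * q A u - ω' * q A v| ≤ (W * N * (1 + 3 * (1 + 2 / c))) * |u - v| ^ γ *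
      (Real.exp (-C * u ^ 2) + Real.exp (-C * v ^ 2)) := by
  set k := 3 * (1 + 2 / c) with hk
  have hk0 : 0 < k := by positivity
  have hcC : C ≤ c := by linarith
  set η := |u - v| with hη
  have hη0 : 0 ≤ η := abs_nonneg _
  have eu := Real.exp_pos (-C * u ^ 2)
  have ev := Real.exp_pos (-C * v ^ 2)
  rcases le_or_gt η 1 with h' | h'
  · have e : ω * q A u - ω' * q A v = (ω - ω') * q A u + ω' * (q A u - q A v) := by ring
    rw [e]
    refine (abs_add_le _ _).trans ?_
    rw [abs_mul, abs_mul]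
    have g1 : η ^ α ≤ η ^ γ := Real.rpow_le_rpow_of_exponent_ge_of_imp hη0 h' hγα.le (by
      intro _ h0; linarith)
    have g2 : η ≤ η ^ γ := by
      have := Real.rpow_le_rpow_of_exponent_ge_of_imp hη0 h' (show γ ≤ 1 by linarith) (by
        intro _ h0; linarith)
      simpa using this
    have hvu : 1 + |v| ≤ 2 + |u| := by
      have h3 := abs_sub_abs_le_abs_sub v u
      rw [abs_sub_comm] at h3
      linarith
    calc _ ≤ (W * η ^ α) * (N * Real.exp (-c * u ^ 2)) +
          (W * (1 + |v|)) * (N * η * (Real.exp (-c * u ^ 2) + Real.exp (-c * v ^ 2))) := by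
          gcongr
          · exact h.bd A u h1 h2
          · exact h.lip A u v h1 h2
      _ ≤ (W * η ^ γ) * (N * Real.exp (-c * u ^ 2)) +
          (W * (1 + |v|)) * (N * η ^ γ * (Real.exp (-c * u ^ 2) + Real.exp (-c * v ^ 2))) := by
          gcongr
      _ = W * N * η ^ γ * (Real.exp (-c * u ^ 2) + (1 + |v|) * Real.exp (-c * u ^ 2) +
          (1 + |v|) * Real.exp (-c * v ^ 2)) := by ring
      _ ≤ W * N * η ^ γ * (Real.exp (-C * u ^ 2) + k * Real.exp (-C * u ^ 2) +
          k * Real.exp (-C * v ^ 2)) := by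
          gcongr W * N * η ^ γ * (?_ + ?_ + ?_)
          · exact exp_sq_mono hcC u
          · exact abs_weight_mul_exp hc hC hvu
          · exact abs_weight_mul_exp hc hC (by linarith)
      _ ≤ W * N * η ^ γ * ((1 + k) * (Real.exp (-C * u ^ 2) + Real.exp (-C * v ^ 2))) := by
          gcongr
          linarith
      _ = _ := by ring
  · have g1 : 1 ≤ η ^ γ := Real.one_le_rpow h'.le hγ.le
    calc _ ≤ |ω * q A u| + |ω' * q A v| := abs_sub _ _
      _ ≤ W * N * k * Real.exp (-C * u ^ 2) + W * N * k * Real.exp (-C * v ^ 2) :=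
          add_le_add (prof_bd h hN hc hC hW h1 h2 hω) (prof_bd h hN hc hC hW h1 h2 hω')
      _ = W * N * k * 1 * (Real.exp (-C * u ^ 2) + Real.exp (-C * v ^ 2)) := by ring
      _ ≤ _ := by
          gcongr
          linarith
end

/-! ### The first kernel in self-similar variables -/

noncomputable section

lemma hasDerivAt_q0 (A u : ℝ) : HasDerivAt (q0 A) (q1 A u) u := by
  have h1 : HasDerivAt (fun u : ℝ => -(u ^ 2 / (4 * A))) (-(2 * u / (4 * A))) u := by
    refine ((hasDerivAt_pow 2 u).div_const (4 * A)).neg.congr_deriv ?_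
    simp
  have h2 := h1.exp.const_mul (√(4 * Real.pi * A))⁻¹
  refine h2.congr_deriv ?_
  simp only [q1, q0]
  have : 2 * u / (4 * A) = 1 / (2 * A) * u := by
    rcases eq_or_ne A 0 with rfl | hA
    · simp
    · field_simp; ring
  rw [this]
  ring

lemma hasDerivAt_q1 (A u : ℝ) : HasDerivAt (q1 A) (q2 A u) u := by
  have h1 := ((hasDerivAt_id u).mul (hasDerivAt_q0 A u)).const_mul (-(1 / (2 * A)))
  refine h1.congr_deriv ?_
  simp only [q2, id]
  ring

lemma measurable_q0 : Measurable (fun p : ℝ × ℝ => q0 p.1 p.2) := by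
  unfold q0; fun_prop
lemma measurable_q1 : Measurable (fun p : ℝ × ℝ => q1 p.1 p.2) := by
  unfold q1 q0; fun_prop
lemma measurable_q2 : Measurable (fun p : ℝ × ℝ => q2 p.1 p.2) := by
  unfold q2 q1 q0; fun_prop

lemma Zf_eq {a : ℝ → ℝ → ℝ} {t ξ τ : ℝ} (h : τ < t) (ha : 0 < a ξ τ) (x : ℝ) :
    Zf a x t ξ τ = (√(t - τ))⁻¹ * q0 (a ξ τ) ((x - ξ) / √(t - τ)) := by
  have hd : 0 < t - τ := by linarith
  have hπ := Real.pi_pos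
  unfold Zf q0
  rw [Real.sqrt_mul (by positivity), div_pow, Real.sq_sqrt hd.le, mul_inv,
    show -(x - ξ) ^ 2 / (4 * a ξ τ * (t - τ)) = -((x - ξ) ^ 2 / (t - τ) / (4 * a ξ τ)) by
      field_simp]
  ring

/-- The kernel `(LZ)₁` in self-similar variables: with `h = √(t-τ)` and `u = (x-ξ)/h`, the space
derivatives of the parametrix are `h⁻²`, `h⁻³` times the profiles `q1`, `q2`. -/
lemma LZ1_eq {a b c : ℝ → ℝ → ℝ} {t ξ τ : ℝ} (h : τ < t) (ha : 0 < a ξ τ) (x : ℝ) :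
    LZ1 a b c x t ξ τ = (√(t - τ) ^ 3)⁻¹ *
      ((a ξ τ - a x t) * q2 (a ξ τ) ((x - ξ) / √(t - τ)) +
        √(t - τ) * b x t * q1 (a ξ τ) ((x - ξ) / √(t - τ)) +
        √(t - τ) ^ 2 * c x t * q0 (a ξ τ) ((x - ξ) / √(t - τ))) := by
  have hd : 0 < t - τ := by linarith
  have hh : 0 < √(t - τ) := Real.sqrt_pos.mpr hd
  unfold LZ1
  have hZ : (fun y => Zf a y t ξ τ) =
      fun y => (√(t - τ))⁻¹ * q0 (a ξ τ) ((y - ξ) / √(t - τ)) := funext (Zf_eq h ha)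
  have hu : ∀ y, HasDerivAt (fun y : ℝ => (y - ξ) / √(t - τ)) (1 / √(t - τ)) y := fun y =>
    ((hasDerivAt_id y).sub_const ξ).div_const _
  have hZ1 : deriv (fun y => Zf a y t ξ τ) =
      fun y => (√(t - τ))⁻¹ * (q1 (a ξ τ) ((y - ξ) / √(t - τ)) * (1 / √(t - τ))) := by
    funext y
    rw [hZ]
    exact (((hasDerivAt_q0 (a ξ τ) _).comp y (hu y)).const_mul _).deriv
  have hZ2 : iteratedDeriv 2 (fun y => Zf a y t ξ τ) x =
      (√(t - τ))⁻¹ * (q2 (a ξ τ) ((x - ξ) / √(t - τ)) * (1 / √(t - τ)) * (1 / √(t - τ))) := by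
    rw [iteratedDeriv_succ, iteratedDeriv_one, hZ1]
    exact ((((hasDerivAt_q1 (a ξ τ) _).comp x (hu x)).mul_const _).const_mul _).deriv
  rw [hZ2, hZ1, Zf_eq h ha]
  field_simp

/-- The kernel `(LZ)₁` between the space-time points `X = (t, x)` and `Ξ = (τ, ξ)` (time first),
extended by zero outside `0 ≤ τ < t ≤ T`. -/
def kap (T : ℝ) (a b c : ℝ → ℝ → ℝ) (X Ξ : ℝ × ℝ) : ℝ :=
  if 0 ≤ Ξ.1 ∧ Ξ.1 < X.1 ∧ X.1 ≤ T then
    (√(X.1 - Ξ.1) ^ 3)⁻¹ *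
      ((a Ξ.2 Ξ.1 - a X.2 X.1) * q2 (a Ξ.2 Ξ.1) ((X.2 - Ξ.2) / √(X.1 - Ξ.1)) +
        √(X.1 - Ξ.1) * b X.2 X.1 * q1 (a Ξ.2 Ξ.1) ((X.2 - Ξ.2) / √(X.1 - Ξ.1)) +
        √(X.1 - Ξ.1) ^ 2 * c X.2 X.1 * q0 (a Ξ.2 Ξ.1) ((X.2 - Ξ.2) / √(X.1 - Ξ.1)))
  else 0

/-- The consequences of `v ∈ B(R,lam,α)` that enter the estimates. -/
structure Coef (T R lam α : ℝ) (a b c : ℝ → ℝ → ℝ) : Prop where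
  low : ∀ x t, 0 ≤ t → t ≤ T → lam ≤ a x t
  ha : inC T α R R a
  hb : inC T α R R b
  hc : inC T α R R c

lemma inC.mono {T α C1 C2 D : ℝ} {f : ℝ → ℝ → ℝ} (h : inC T α C1 C2 f) (h1 : C1 ≤ D)
    (h2 : C2 ≤ D) : inC T α D D f := by
  refine ⟨fun x t h3 h4 => (h.1 x t h3 h4).trans h1, fun x t x' t' h3 h4 h5 h6 =>
    (h.2 x t x' t' h3 h4 h5 h6).trans ?_⟩
  gcongr

lemma memB.coef {T R lam α : ℝ} {a b c : ℝ → ℝ → ℝ} (h : memB T R lam α a b c) :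
    Coef T R lam α a b c := by
  obtain ⟨h0, ⟨A1, A2, p1, p2, p3, p4⟩, ⟨B1, B2, r1, r2, r3, r4⟩, ⟨D1, D2, s1, s2, s3, s4⟩⟩ := h
  exact ⟨h0, p4.mono (by linarith) (by linarith), r4.mono (by linarith) (by linarith),
    s4.mono (by linarith) (by linarith)⟩

/-- A parabolic Hölder function on the strip, frozen in time outside `[0, T]`, is measurable. -/
lemma measurable_clamp {T α D : ℝ} (hT : 0 < T) (hα : 0 < α) {f : ℝ → ℝ → ℝ}
    (hf : inC T α D D f) : Measurable (fun p : ℝ × ℝ => f p.2 (max 0 (min p.1 T))) := by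
  apply Continuous.measurable
  rw [continuous_iff_continuousAt]
  intro p
  have hcl : ∀ t : ℝ, 0 ≤ max 0 (min t T) ∧ max 0 (min t T) ≤ T := fun t =>
    ⟨le_max_left _ _, max_le hT.le (min_le_right _ _)⟩
  rw [ContinuousAt, tendsto_iff_norm_sub_tendsto_zero]
  have hg : Continuous (fun q : ℝ × ℝ =>
      D * (|q.2 - p.2| ^ α + |max 0 (min q.1 T) - max 0 (min p.1 T)| ^ (α / 2))) := by
    refine continuous_const.mul (Continuous.add ?_ ?_)
    · exact Continuous.rpow_const (by fun_prop) (fun _ => Or.inr hα.le)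
    · exact Continuous.rpow_const (by fun_prop) (fun _ => Or.inr (by positivity))
  have h0 := hg.tendsto p
  simp only [sub_self, abs_zero, Real.zero_rpow hα.ne',
    Real.zero_rpow (show α / 2 ≠ 0 by positivity), add_zero, mul_zero] at h0
  refine squeeze_zero (fun _ => norm_nonneg _) (fun q => ?_) h0
  exact hf.2 _ _ _ _ (hcl q.1).1 (hcl q.1).2 (hcl p.1).1 (hcl p.1).2

lemma measurable_kap {T R lam α : ℝ} (hT : 0 < T) (hα : 0 < α) {a b c : ℝ → ℝ → ℝ}
    (h : Coef T R lam α a b c) : Measurable (Function.uncurry (kap T a b c)) := by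
  have ma := measurable_clamp hT hα h.ha
  have mb := measurable_clamp hT hα h.hb
  have mc := measurable_clamp hT hα h.hc
  have e : Function.uncurry (kap T a b c) =
      Function.uncurry (kap T (fun x t => a x (max 0 (min t T)))
        (fun x t => b x (max 0 (min t T))) (fun x t => c x (max 0 (min t T)))) := by
    funext ⟨X, Ξ⟩
    simp only [Function.uncurry, kap]
    split_ifs with hc
    · obtain ⟨h1, h2, h3⟩ := hc
      have e1 : max 0 (min X.1 T) = X.1 := by
        rw [min_eq_left h3, max_eq_right (by linarith)]
      have e2 : max 0 (min Ξ.1 T) = Ξ.1 := by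
        rw [min_eq_left (by linarith), max_eq_right h1]
      rw [e1, e2]
    · rfl
  rw [e]
  have maX : Measurable (fun p : (ℝ × ℝ) × (ℝ × ℝ) => a p.1.2 (max 0 (min p.1.1 T))) :=
    ma.comp measurable_fst
  have maΞ : Measurable (fun p : (ℝ × ℝ) × (ℝ × ℝ) => a p.2.2 (max 0 (min p.2.1 T))) :=
    ma.comp measurable_snd
  have mbX : Measurable (fun p : (ℝ × ℝ) × (ℝ × ℝ) => b p.1.2 (max 0 (min p.1.1 T))) :=
    mb.comp measurable_fst
  have mcX : Measurable (fun p : (ℝ × ℝ) × (ℝ × ℝ) => c p.1.2 (max 0 (min p.1.1 T))) :=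
    mc.comp measurable_fst
  have mu : Measurable (fun p : (ℝ × ℝ) × (ℝ × ℝ) => (p.1.2 - p.2.2) / √(p.1.1 - p.2.1)) := by
    fun_prop
  have mh : Measurable (fun p : (ℝ × ℝ) × (ℝ × ℝ) => √(p.1.1 - p.2.1)) := by fun_prop
  have m0 := measurable_q0.comp (maΞ.prodMk mu)
  have m1 := measurable_q1.comp (maΞ.prodMk mu)
  have m2 := measurable_q2.comp (maΞ.prodMk mu)
  refine Measurable.ite ?_ ?_ measurable_const
  · have tX : Measurable (fun p : (ℝ × ℝ) × (ℝ × ℝ) => p.1.1) := by fun_prop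
    have tΞ : Measurable (fun p : (ℝ × ℝ) × (ℝ × ℝ) => p.2.1) := by fun_prop
    exact (measurableSet_le measurable_const tΞ).inter
      ((measurableSet_lt tΞ tX).inter (measurableSet_le tX measurable_const))
  · exact ((mh.pow_const 3).inv).mul ((((maΞ.sub maX).mul m2).add ((mh.mul mbX).mul m1)).add
      (((mh.pow_const 2).mul mcX).mul m0))

section omega
variable {T α D : ℝ} {f : ℝ → ℝ → ℝ} {x t ξ τ : ℝ}

lemma sqrt_rpow_eq {δ : ℝ} (hδ : 0 < δ) (α : ℝ) : √δ ^ α = δ ^ (α / 2) := by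
  rw [Real.sqrt_eq_rpow, ← Real.rpow_mul hδ.le]
  congr 1
  ring

lemma abs_rpow_div {h : ℝ} (hh : 0 < h) (z : ℝ) (α : ℝ) : |z| ^ α / h ^ α = |z / h| ^ α := by
  rw [abs_div, abs_of_pos hh, Real.div_rpow (abs_nonneg _) hh.le]

/-- Hölder continuity gains `(t-τ)^{α/2}` at the cost of a linear weight in `u`. -/
lemma omega_two (hα : 0 < α) (hα1 : α ≤ 1) (hT : 0 < T) (hD : 0 ≤ D) (hf : inC T α D D f)
    (h1 : 0 ≤ τ) (h2 : τ < t) (h3 : t ≤ T) :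
    |(f ξ τ - f x t) / √(t - τ) ^ α| ≤ 2 * D * (1 + T) ^ 2 * (1 + |(x - ξ) / √(t - τ)|) := by
  have hd : 0 < t - τ := by linarith
  have hh : 0 < √(t - τ) := Real.sqrt_pos.mpr hd
  have hp : 0 < √(t - τ) ^ α := Real.rpow_pos_of_pos hh _
  rw [abs_div, abs_of_pos hp]
  have hb := hf.2 ξ τ x t h1 (by linarith) (by linarith) h3
  rw [abs_sub_comm ξ x, abs_sub_comm τ t, abs_of_pos hd, ← sqrt_rpow_eq hd] at hb
  set u := (x - ξ) / √(t - τ) with hu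
  have hu0 := abs_nonneg u
  have h4 : |u| ^ α ≤ 1 + |u| := by
    calc |u| ^ α ≤ (1 + |u|) ^ α := Real.rpow_le_rpow hu0 (by linarith) hα.le
      _ ≤ (1 + |u|) ^ (1 : ℝ) := Real.rpow_le_rpow_of_exponent_le (by linarith) hα1
      _ = _ := Real.rpow_one _
  have h5 : 1 ≤ (1 + T) ^ 2 := by nlinarith
  calc |f ξ τ - f x t| / √(t - τ) ^ α
      ≤ D * (|x - ξ| ^ α + √(t - τ) ^ α) / √(t - τ) ^ α := by gcongr
    _ = D * (|x - ξ| ^ α / √(t - τ) ^ α + 1) := by field_simp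
    _ = D * (|u| ^ α + 1) := by rw [abs_rpow_div hh]
    _ ≤ D * (2 * (1 + |u|)) := by gcongr; linarith
    _ = 2 * D * 1 * (1 + |u|) := by ring
    _ ≤ _ := by gcongr

lemma sqrt_pow_div_le (hα : 0 < α) (hα1 : α ≤ 1) (hT : 0 < T) (h1 : 0 ≤ τ) (h2 : τ < t)
    (h3 : t ≤ T) : √(t - τ) / √(t - τ) ^ α ≤ 1 + T ∧ √(t - τ) ≤ 1 + T := by
  have hd : 0 < t - τ := by linarith
  have hh : 0 < √(t - τ) := Real.sqrt_pos.mpr hd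
  have h4 : √(t - τ) ≤ 1 + T := by
    rw [Real.sqrt_le_left (by linarith)]
    nlinarith
  refine ⟨?_, h4⟩
  calc √(t - τ) / √(t - τ) ^ α = √(t - τ) ^ (1 - α) := by
        rw [Real.rpow_sub hh, Real.rpow_one]
    _ ≤ (1 + T) ^ (1 - α) := Real.rpow_le_rpow hh.le h4 (by linarith)
    _ ≤ (1 + T) ^ (1 : ℝ) := Real.rpow_le_rpow_of_exponent_le (by linarith) (by linarith)
    _ = _ := Real.rpow_one _

lemma omega_one (hα : 0 < α) (hα1 : α ≤ 1) (hT : 0 < T) (hD : 0 ≤ D) (hf : inC T α D D f)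
    (h1 : 0 ≤ τ) (h2 : τ < t) (h3 : t ≤ T) (u : ℝ) :
    |√(t - τ) * f x t / √(t - τ) ^ α| ≤ 2 * D * (1 + T) ^ 2 * (1 + |u|) := by
  obtain ⟨h4, h5⟩ := sqrt_pow_div_le hα hα1 hT h1 h2 h3
  have hd : 0 < t - τ := by linarith
  have hh : 0 < √(t - τ) := Real.sqrt_pos.mpr hd
  have hp : 0 < √(t - τ) ^ α := Real.rpow_pos_of_pos hh _
  rw [mul_div_right_comm, abs_mul, abs_of_pos (by positivity)]
  have hu0 := abs_nonneg u
  have h6 : 0 ≤ D * T := by positivity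
  have h7 : 1 + T ≤ (1 + T) ^ 2 := by nlinarith
  calc _ ≤ (1 + T) * D := by
        gcongr
        exact hf.1 x t (by linarith) h3
    _ = 1 * D * (1 + T) * 1 := by ring
    _ ≤ _ := by
        gcongr
        · norm_num
        · linarith

lemma omega_zero (hα : 0 < α) (hα1 : α ≤ 1) (hT : 0 < T) (hD : 0 ≤ D) (hf : inC T α D D f)
    (h1 : 0 ≤ τ) (h2 : τ < t) (h3 : t ≤ T) (u : ℝ) :
    |√(t - τ) ^ 2 * f x t / √(t - τ) ^ α| ≤ 2 * D * (1 + T) ^ 2 * (1 + |u|) := by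
  obtain ⟨h4, h5⟩ := sqrt_pow_div_le hα hα1 hT h1 h2 h3
  have hd : 0 < t - τ := by linarith
  have hh : 0 < √(t - τ) := Real.sqrt_pos.mpr hd
  have hp : 0 < √(t - τ) ^ α := Real.rpow_pos_of_pos hh _
  have e : √(t - τ) ^ 2 * f x t / √(t - τ) ^ α =
      (√(t - τ) * (√(t - τ) / √(t - τ) ^ α)) * f x t := by ring
  rw [e, abs_mul, abs_of_pos (by positivity)]
  have hu0 := abs_nonneg u
  calc _ ≤ ((1 + T) * (1 + T)) * D := by
        gcongr
        exact hf.1 x t (by linarith) h3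
    _ = 1 * D * (1 + T) ^ 2 * 1 := by ring
    _ ≤ _ := by
        gcongr
        · norm_num
        · linarith

/-- Space increments of the weights; the factor `g` is `1`, `h` or `h²`. -/
lemma omega_hol (hα : 0 < α) (hT : 0 < T) (hD : 0 ≤ D) (hf : inC T α D D f)
    (h1 : 0 ≤ τ) (h2 : τ < t) (h3 : t ≤ T) {g : ℝ} (hg0 : 0 ≤ g) (hg : g ≤ (1 + T) ^ 2)
    (x y ξ : ℝ) :
    |g * (f x t - f y t) / √(t - τ) ^ α| ≤
      2 * D * (1 + T) ^ 2 * |(x - ξ) / √(t - τ) - (y - ξ) / √(t - τ)| ^ α := by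
  have hd : 0 < t - τ := by linarith
  have hh : 0 < √(t - τ) := Real.sqrt_pos.mpr hd
  have hp : 0 < √(t - τ) ^ α := Real.rpow_pos_of_pos hh _
  have hb := hf.2 x t y t (by linarith) h3 (by linarith) h3
  rw [sub_self, abs_zero, Real.zero_rpow (by positivity), add_zero] at hb
  rw [abs_div, abs_of_pos hp, abs_mul, abs_of_nonneg hg0]
  have e : (x - ξ) / √(t - τ) - (y - ξ) / √(t - τ) = (x - y) / √(t - τ) := by
    rw [← sub_div]
    congr 1
    ring
  rw [e, ← abs_rpow_div hh]
  calc _ ≤ (1 + T) ^ 2 * (D * |x - y| ^ α) / √(t - τ) ^ α := by gcongr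
    _ = 1 * D * (1 + T) ^ 2 * (|x - y| ^ α / √(t - τ) ^ α) := by ring
    _ ≤ _ := by
        gcongr
        norm_num
end omega
end

/-! ### Kernel estimates -/

noncomputable section

/-- One pair of constants serves the three profiles. -/
lemma exists_common_prof {lam R : ℝ} (hlam : 0 < lam) (hR : 0 < R) :
    ∃ N c, 0 < N ∧ 0 < c ∧ Prof lam R N c q0 ∧ Prof lam R N c q1 ∧ Prof lam R N c q2 := by
  obtain ⟨N0, c0, n0, p0, h0⟩ := isProf_q0 hlam hR
  obtain ⟨N1, c1, n1, p1, h1⟩ := isProf_q1 hlam hR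
  obtain ⟨N2, c2, n2, p2, h2⟩ := isProf_q2 hlam hR
  refine ⟨N0 + N1 + N2, min c0 (min c1 c2), by positivity, by positivity,
    h0.mono n0.le (by linarith) (min_le_left _ _),
    h1.mono n1.le (by linarith) ((min_le_right _ _).trans (min_le_left _ _)),
    h2.mono n2.le (by linarith) ((min_le_right _ _).trans (min_le_right _ _))⟩

/-- The cut-off kernel with the factor `(t-τ)^{α/2-3/2}` extracted. -/
lemma kap_eq {T t τ : ℝ} (a b c : ℝ → ℝ → ℝ) (α : ℝ) (x ξ : ℝ) (h1 : 0 ≤ τ) (h2 : τ < t)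
    (h3 : t ≤ T) :
    kap T a b c (t, x) (τ, ξ) = (t - τ) ^ (α / 2 - 3 / 2) *
      ((a ξ τ - a x t) / √(t - τ) ^ α * q2 (a ξ τ) ((x - ξ) / √(t - τ)) +
        √(t - τ) * b x t / √(t - τ) ^ α * q1 (a ξ τ) ((x - ξ) / √(t - τ)) +
        √(t - τ) ^ 2 * c x t / √(t - τ) ^ α * q0 (a ξ τ) ((x - ξ) / √(t - τ))) := by
  have hd : 0 < t - τ := by linarith
  have hh : 0 < √(t - τ) := Real.sqrt_pos.mpr hd
  have hp : 0 < √(t - τ) ^ α := Real.rpow_pos_of_pos hh _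
  have e : (t - τ) ^ (α / 2 - 3 / 2) = √(t - τ) ^ α / √(t - τ) ^ 3 := by
    rw [Real.rpow_sub hd, sqrt_rpow_eq hd, ← Real.rpow_natCast, sqrt_rpow_eq hd]
    norm_num
  simp only [kap]
  rw [if_pos ⟨h1, h2, h3⟩, e]
  field_simp

lemma gk_eq {C s t τ x ξ : ℝ} (hC : 0 < C) (hs : 0 < s) (h : τ < t) :
    (t - τ) ^ (s - 3 / 2) * Real.exp (-C * ((x - ξ) / √(t - τ)) ^ 2) =
      (Real.Gamma s * √(Real.pi / C)) * gk C s ((t, x) - (τ, ξ)) := by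
  have hd : 0 < t - τ := by linarith
  have hg := Real.Gamma_pos_of_pos hs
  have hq : 0 < √(Real.pi / C) := Real.sqrt_pos.mpr (div_pos Real.pi_pos hC)
  simp only [gk, Prod.mk_sub_mk]
  rw [if_pos hd, div_pow, Real.sq_sqrt hd.le, ← mul_div_assoc]
  field_simp

lemma abs_three {x y z B : ℝ} (hx : |x| ≤ B) (hy : |y| ≤ B) (hz : |z| ≤ B) :
    |x + y + z| ≤ 3 * B := by
  have h1 := abs_add_le (x + y) z
  have h2 := abs_add_le x y
  linarith

/-- The kernel estimates from which everything follows: size, dependence on the coefficients and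
Hölder continuity in the first space variable, with one Gaussian rate `C` and one constant `M`. -/
lemma kernel_bounds {T R lam α γ : ℝ} (hT : 0 < T) (hR : 0 < R) (hlam : 0 < lam)
    (hα : 0 < α) (hα1 : α ≤ 1) (hγ0 : 0 < γ) (hγα : γ < α) :
    ∃ C, 0 < C ∧ C < 1 / (4 * R) ∧ ∃ M, 0 ≤ M ∧
      (∀ a b c, Coef T R lam α a b c → ∀ X Ξ, |kap T a b c X Ξ| ≤ M * gk C (α / 2) (X - Ξ)) ∧
      (∀ a b c a' b' c' d, Coef T R lam α a b c → Coef T R lam α a' b' c' → 0 ≤ d →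
        inC T α d d (fun x t => a x t - a' x t) → inC T α d d (fun x t => b x t - b' x t) →
        inC T α d d (fun x t => c x t - c' x t) → ∀ X Ξ,
          |kap T a b c X Ξ - kap T a' b' c' X Ξ| ≤ (M * d) * gk C (α / 2) (X - Ξ)) ∧
      (∀ a b c, Coef T R lam α a b c → ∀ t x y P,
        |kap T a b c (t, x) P - kap T a b c (t, y) P| ≤ (M * |x - y| ^ γ) *
          (gk C ((α - γ) / 2) ((t, x) - P) + gk C ((α - γ) / 2) ((t, y) - P))) := by
  obtain ⟨N, c₀, hN, hc₀, hq0, hq1, hq2⟩ := exists_common_prof hlam hR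
  set C : ℝ := min (c₀ / 2) (1 / (8 * R)) with hCdef
  have hC0 : 0 < C := by positivity
  have hCc : C ≤ c₀ / 2 := min_le_left _ _
  have hCR : C < 1 / (4 * R) := by
    refine (min_le_right _ _).trans_lt ?_
    apply one_div_lt_one_div_of_lt <;> linarith
  set W : ℝ := 2 * (R + 1) * (1 + T) ^ 2 with hW
  have hW0 : 0 ≤ W := by positivity
  set k : ℝ := 3 * (1 + 2 / c₀) with hk
  have hk0 : 0 < k := by positivity
  have hs : 0 < α / 2 := by positivity
  have hs' : 0 < (α - γ) / 2 := by linarith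
  set G : ℝ := Real.Gamma (α / 2) * √(Real.pi / C) with hG
  set G' : ℝ := Real.Gamma ((α - γ) / 2) * √(Real.pi / C) with hG'
  have hG0 : 0 ≤ G := mul_nonneg (Real.Gamma_pos_of_pos hs).le (Real.sqrt_nonneg _)
  have hG0' : 0 ≤ G' := mul_nonneg (Real.Gamma_pos_of_pos hs').le (Real.sqrt_nonneg _)
  -- the weights of `kap_eq` are bounded with the constant `W`
  have hRW : 2 * R * (1 + T) ^ 2 ≤ W := by rw [hW]; gcongr; linarith
  have hdW : ∀ d : ℝ, 0 ≤ d → 2 * d * (1 + T) ^ 2 ≤ W * d := by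
    intro d hd
    have : 0 ≤ R * d * (1 + T) ^ 2 := by positivity
    rw [hW]
    nlinarith
  have hup : ∀ u : ℝ, 2 * R * (1 + T) ^ 2 * (1 + |u|) ≤ W * (1 + |u|) := fun u => by gcongr
  have hupd : ∀ d u : ℝ, 0 ≤ d → 2 * d * (1 + T) ^ 2 * (1 + |u|) ≤ W * d * (1 + |u|) :=
    fun d u hd => by
      have := hdW d hd
      gcongr
  have hAR : ∀ {a b c}, Coef T R lam α a b c → ∀ x t, 0 ≤ t → t ≤ T → a x t ≤ R :=
    fun h x t h1 h2 => (le_abs_self _).trans (h.ha.1 x t h1 h2)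
  refine ⟨C, hC0, hCR, 6 * (W * N * (1 + k)) * (G + G'), by positivity, ?_, ?_, ?_⟩
  · rintro a b c h ⟨t, x⟩ ⟨τ, ξ⟩
    by_cases hcut : 0 ≤ τ ∧ τ < t ∧ t ≤ T
    swap
    · simp only [kap, if_neg hcut, abs_zero]
      exact mul_nonneg (by positivity) (gk_nonneg hs _)
    obtain ⟨h1, h2, h3⟩ := hcut
    have hd : 0 < t - τ := by linarith
    have hP : 0 < (t - τ) ^ (α / 2 - 3 / 2) := Real.rpow_pos_of_pos hd _
    have hg := gk_nonneg (C := C) hs ((t, x) - (τ, ξ))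
    have hl := h.low ξ τ h1 (by linarith)
    have hu := hAR h ξ τ h1 (by linarith)
    rw [kap_eq a b c α x ξ h1 h2 h3, abs_mul, abs_of_pos hP]
    have e2 := prof_bd hq2 hN hc₀ hCc hW0 hl hu
      ((omega_two (x := x) (ξ := ξ) hα hα1 hT hR.le h.ha h1 h2 h3).trans (hup _))
    have e1 := prof_bd hq1 hN hc₀ hCc hW0 hl hu
      ((omega_one (x := x) hα hα1 hT hR.le h.hb h1 h2 h3 _).trans
        (hup ((x - ξ) / √(t - τ))))
    have e0 := prof_bd hq0 hN hc₀ hCc hW0 hl hu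
      ((omega_zero (x := x) hα hα1 hT hR.le h.hc h1 h2 h3 _).trans
        (hup ((x - ξ) / √(t - τ))))
    calc _ ≤ (t - τ) ^ (α / 2 - 3 / 2) *
          (3 * (W * N * k * Real.exp (-C * ((x - ξ) / √(t - τ)) ^ 2))) := by
          gcongr
          exact abs_three e2 e1 e0
      _ = 3 * (W * N * k) * ((t - τ) ^ (α / 2 - 3 / 2) *
          Real.exp (-C * ((x - ξ) / √(t - τ)) ^ 2)) := by ring
      _ = 3 * (W * N * k) * G * gk C (α / 2) ((t, x) - (τ, ξ)) := by
          rw [gk_eq hC0 hs h2]; ring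
      _ ≤ _ := by
          gcongr
          · norm_num
          · linarith
          · linarith
  · rintro a b c a' b' c' d h h' hd0 da db dc ⟨t, x⟩ ⟨τ, ξ⟩
    by_cases hcut : 0 ≤ τ ∧ τ < t ∧ t ≤ T
    swap
    · simp only [kap, if_neg hcut, sub_self, abs_zero]
      exact mul_nonneg (by positivity) (gk_nonneg hs _)
    obtain ⟨h1, h2, h3⟩ := hcut
    have hd : 0 < t - τ := by linarith
    have hP : 0 < (t - τ) ^ (α / 2 - 3 / 2) := Real.rpow_pos_of_pos hd _
    have hg := gk_nonneg (C := C) hs ((t, x) - (τ, ξ))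
    have hl := h.low ξ τ h1 (by linarith)
    have hu := hAR h ξ τ h1 (by linarith)
    have hl' := h'.low ξ τ h1 (by linarith)
    have hu' := hAR h' ξ τ h1 (by linarith)
    have hA := da.1 ξ τ h1 (by linarith)
    rw [kap_eq a b c α x ξ h1 h2 h3, kap_eq a' b' c' α x ξ h1 h2 h3, ← mul_sub, abs_mul,
      abs_of_pos hP]
    have e2 := prof_diff hq2 hN hc₀ hCc hW0 hl hu hl' hu' hA
      ((omega_two (x := x) (ξ := ξ) hα hα1 hT hR.le h'.ha h1 h2 h3).trans (hup _))
      (ω := (a ξ τ - a x t) / √(t - τ) ^ α) (by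
        refine le_trans (le_of_eq ?_)
          ((omega_two (x := x) (ξ := ξ) hα hα1 hT hd0 da h1 h2 h3).trans (hupd _ _ hd0))
        congr 1; ring)
    have e1 := prof_diff hq1 hN hc₀ hCc hW0 hl hu hl' hu' hA
      ((omega_one (x := x) hα hα1 hT hR.le h'.hb h1 h2 h3 _).trans (hup ((x - ξ) / √(t - τ))))
      (ω := √(t - τ) * b x t / √(t - τ) ^ α) (by
        refine le_trans (le_of_eq ?_)
          ((omega_one (x := x) hα hα1 hT hd0 db h1 h2 h3 _).trans (hupd _ _ hd0))
        congr 1; ring)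
    have e0 := prof_diff hq0 hN hc₀ hCc hW0 hl hu hl' hu' hA
      ((omega_zero (x := x) hα hα1 hT hR.le h'.hc h1 h2 h3 _).trans (hup ((x - ξ) / √(t - τ))))
      (ω := √(t - τ) ^ 2 * c x t / √(t - τ) ^ α) (by
        refine le_trans (le_of_eq ?_)
          ((omega_zero (x := x) hα hα1 hT hd0 dc h1 h2 h3 _).trans (hupd _ _ hd0))
        congr 1; ring)
    calc _ ≤ (t - τ) ^ (α / 2 - 3 / 2) *
          (3 * (2 * (W * N * k) * d * Real.exp (-C * ((x - ξ) / √(t - τ)) ^ 2))) := by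
          gcongr
          refine le_trans (le_of_eq ?_) (abs_three e2 e1 e0)
          congr 1; ring
      _ = 6 * (W * N * k) * d * ((t - τ) ^ (α / 2 - 3 / 2) *
          Real.exp (-C * ((x - ξ) / √(t - τ)) ^ 2)) := by ring
      _ = 6 * (W * N * k) * G * d * gk C (α / 2) ((t, x) - (τ, ξ)) := by
          rw [gk_eq hC0 hs h2]; ring
      _ ≤ _ := by
          gcongr
          · linarith
          · linarith
  · rintro a b c h t x y ⟨τ, ξ⟩
    by_cases hcut : 0 ≤ τ ∧ τ < t ∧ t ≤ T
    swap
    · simp only [kap, if_neg hcut, sub_self, abs_zero]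
      exact mul_nonneg (by positivity) (add_nonneg (gk_nonneg hs' _) (gk_nonneg hs' _))
    obtain ⟨h1, h2, h3⟩ := hcut
    have hd : 0 < t - τ := by linarith
    have hh : 0 < √(t - τ) := Real.sqrt_pos.mpr hd
    have hP : 0 < (t - τ) ^ (α / 2 - 3 / 2) := Real.rpow_pos_of_pos hd _
    have hg := gk_nonneg (C := C) hs' ((t, x) - (τ, ξ))
    have hg' := gk_nonneg (C := C) hs' ((t, y) - (τ, ξ))
    have hl := h.low ξ τ h1 (by linarith)
    have hu := hAR h ξ τ h1 (by linarith)
    obtain ⟨-, hhT⟩ := sqrt_pow_div_le hα hα1 hT h1 h2 h3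
    have hupa : ∀ z : ℝ, 2 * R * (1 + T) ^ 2 * |z| ^ α ≤ W * |z| ^ α := fun z => by gcongr
    rw [kap_eq a b c α x ξ h1 h2 h3, kap_eq a b c α y ξ h1 h2 h3, ← mul_sub, abs_mul,
      abs_of_pos hP]
    have e2 := prof_hol hq2 hN hc₀ hCc hW0 hl hu hγ0 hγα hα1
      ((omega_two (x := x) (ξ := ξ) hα hα1 hT hR.le h.ha h1 h2 h3).trans (hup _))
      ((omega_two (x := y) (ξ := ξ) hα hα1 hT hR.le h.ha h1 h2 h3).trans (hup _)) (by
        refine le_trans (le_of_eq ?_)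
          ((omega_hol hα hT hR.le h.ha h1 h2 h3 zero_le_one (by nlinarith) x y ξ).trans (hupa _))
        rw [← abs_neg]
        congr 1; ring)
    have e1 := prof_hol hq1 hN hc₀ hCc hW0 hl hu hγ0 hγα hα1
      ((omega_one (x := x) hα hα1 hT hR.le h.hb h1 h2 h3 _).trans (hup ((x - ξ) / √(t - τ))))
      ((omega_one (x := y) hα hα1 hT hR.le h.hb h1 h2 h3 _).trans (hup ((y - ξ) / √(t - τ)))) (by
        refine le_trans (le_of_eq ?_)
          ((omega_hol hα hT hR.le h.hb h1 h2 h3 hh.le (by nlinarith) x y ξ).trans (hupa _))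
        congr 1; ring)
    have e0 := prof_hol hq0 hN hc₀ hCc hW0 hl hu hγ0 hγα hα1
      ((omega_zero (x := x) hα hα1 hT hR.le h.hc h1 h2 h3 _).trans (hup ((x - ξ) / √(t - τ))))
      ((omega_zero (x := y) hα hα1 hT hR.le h.hc h1 h2 h3 _).trans (hup ((y - ξ) / √(t - τ)))) (by
        refine le_trans (le_of_eq ?_)
          ((omega_hol hα hT hR.le h.hc h1 h2 h3 (sq_nonneg √(t - τ)) (by gcongr) x y ξ).trans (hupa _))
        congr 1; ring)
    have euv : (t - τ) ^ (α / 2 - 3 / 2) * |(x - ξ) / √(t - τ) - (y - ξ) / √(t - τ)| ^ γ =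
        |x - y| ^ γ * (t - τ) ^ ((α - γ) / 2 - 3 / 2) := by
      rw [show (x - ξ) / √(t - τ) - (y - ξ) / √(t - τ) = (x - y) / √(t - τ) by ring,
        ← abs_rpow_div hh, sqrt_rpow_eq hd,
        show (α - γ) / 2 - 3 / 2 = (α / 2 - 3 / 2) - γ / 2 by ring, Real.rpow_sub hd _ (γ / 2)]
      ring
    calc _ ≤ (t - τ) ^ (α / 2 - 3 / 2) *
          (3 * (W * N * (1 + k) * |(x - ξ) / √(t - τ) - (y - ξ) / √(t - τ)| ^ γ *
            (Real.exp (-C * ((x - ξ) / √(t - τ)) ^ 2) +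
              Real.exp (-C * ((y - ξ) / √(t - τ)) ^ 2)))) := by
          gcongr
          refine le_trans (le_of_eq ?_) (abs_three e2 e1 e0)
          congr 1; ring
      _ = 3 * (W * N * (1 + k)) * ((t - τ) ^ (α / 2 - 3 / 2) *
            |(x - ξ) / √(t - τ) - (y - ξ) / √(t - τ)| ^ γ) *
            (Real.exp (-C * ((x - ξ) / √(t - τ)) ^ 2) +
              Real.exp (-C * ((y - ξ) / √(t - τ)) ^ 2)) := by ring
      _ = 3 * (W * N * (1 + k)) * |x - y| ^ γ *
            ((t - τ) ^ ((α - γ) / 2 - 3 / 2) * Real.exp (-C * ((x - ξ) / √(t - τ)) ^ 2) +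
              (t - τ) ^ ((α - γ) / 2 - 3 / 2) * Real.exp (-C * ((y - ξ) / √(t - τ)) ^ 2)) := by
          rw [euv]; ring
      _ = 3 * (W * N * (1 + k)) * G' * |x - y| ^ γ *
            (gk C ((α - γ) / 2) ((t, x) - (τ, ξ)) + gk C ((α - γ) / 2) ((t, y) - (τ, ξ))) := by
          rw [gk_eq hC0 hs' h2, gk_eq hC0 hs' h2]; ring
      _ ≤ _ := by
          gcongr
          · norm_num
          · linarith

/-- For two coefficients with finite Hölder norm the suprema defining `holN` are finite,
so the difference is Hölder with constant `holN`. -/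
lemma inC_holN {T α R : ℝ} {f g : ℝ → ℝ → ℝ} (hf : inC T α R R f)
    (hg : inC T α R R g) :
    0 ≤ holN T α (fun x t => f x t - g x t) ∧
      inC T α (holN T α (fun x t => f x t - g x t)) (holN T α (fun x t => f x t - g x t))
        (fun x t => f x t - g x t) := by
  set w : ℝ → ℝ → ℝ := fun x t => f x t - g x t with hw
  have b1 : BddAbove {r : ℝ | ∃ x t, 0 ≤ t ∧ t ≤ T ∧ r = |w x t|} := by
    refine ⟨R + R, ?_⟩
    rintro r ⟨x, t, h1, h2, rfl⟩
    exact (abs_sub _ _).trans (add_le_add (hf.1 x t h1 h2) (hg.1 x t h1 h2))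
  have b2 : BddAbove {r : ℝ | ∃ x t x' t', 0 ≤ t ∧ t ≤ T ∧ 0 ≤ t' ∧ t' ≤ T ∧
      ¬(x = x' ∧ t = t') ∧ r = |w x t - w x' t'| / (|x - x'| ^ α + |t - t'| ^ (α / 2))} := by
    refine ⟨R + R, ?_⟩
    rintro r ⟨x, t, x', t', h1, h2, h3, h4, -, rfl⟩
    apply div_le_of_le_mul₀ (by positivity)
    · have := (abs_nonneg _).trans (hf.1 x t h1 h2)
      linarith
    have e : w x t - w x' t' = (f x t - f x' t') - (g x t - g x' t') := by rw [hw]; ring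
    rw [e, add_mul]
    exact (abs_sub _ _).trans (add_le_add (hf.2 x t x' t' h1 h2 h3 h4) (hg.2 x t x' t' h1 h2 h3 h4))
  have s1 : 0 ≤ supN T w := Real.sSup_nonneg (by rintro r ⟨x, t, h1, h2, rfl⟩; positivity)
  have s2 : 0 ≤ holS T α w := Real.sSup_nonneg (by
    rintro r ⟨x, t, x', t', h1, h2, h3, h4, -, rfl⟩; positivity)
  refine ⟨add_nonneg s1 s2, fun x t h1 h2 => ?_, fun x t x' t' h1 h2 h3 h4 => ?_⟩
  · have : |w x t| ≤ supN T w := le_csSup b1 ⟨x, t, h1, h2, rfl⟩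
    unfold holN
    linarith
  · by_cases he : x = x' ∧ t = t'
    · obtain ⟨rfl, rfl⟩ := he
      rw [sub_self, abs_zero]
      exact mul_nonneg (add_nonneg s1 s2) (by positivity)
    · have hpos : 0 < |x - x'| ^ α + |t - t'| ^ (α / 2) := by
        rcases not_and_or.mp he with h | h
        · have := Real.rpow_pos_of_pos (abs_pos.mpr (sub_ne_zero.mpr h)) α
          positivity
        · have := Real.rpow_pos_of_pos (abs_pos.mpr (sub_ne_zero.mpr h)) (α / 2)
          positivity
      have : |w x t - w x' t'| / (|x - x'| ^ α + |t - t'| ^ (α / 2)) ≤ holS T α w :=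
        le_csSup b2 ⟨x, t, x', t', h1, h2, h3, h4, he, rfl⟩
      rw [div_le_iff₀ hpos] at this
      refine this.trans ?_
      unfold holN
      gcongr
      linarith

lemma inC_vDist {T R lam α : ℝ} {a b c a' b' c' : ℝ → ℝ → ℝ}
    (h : Coef T R lam α a b c) (h' : Coef T R lam α a' b' c') :
    0 ≤ vDist T α a b c a' b' c' ∧
      inC T α (vDist T α a b c a' b' c') (vDist T α a b c a' b' c') (fun x t => a x t - a' x t) ∧
      inC T α (vDist T α a b c a' b' c') (vDist T α a b c a' b' c') (fun x t => b x t - b' x t) ∧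
      inC T α (vDist T α a b c a' b' c') (vDist T α a b c a' b' c')
        (fun x t => c x t - c' x t) := by
  obtain ⟨ha0, ha⟩ := inC_holN h.ha h'.ha
  obtain ⟨-, hb⟩ := inC_holN h.hb h'.hb
  obtain ⟨-, hc⟩ := inC_holN h.hc h'.hc
  have l1 : holN T α (fun x t => a x t - a' x t) ≤ vDist T α a b c a' b' c' := le_max_left _ _
  have l2 : holN T α (fun x t => b x t - b' x t) ≤ vDist T α a b c a' b' c' :=
    (le_max_left _ _).trans (le_max_right _ _)
  have l3 : holN T α (fun x t => c x t - c' x t) ≤ vDist T α a b c a' b' c' :=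
    (le_max_right _ _).trans (le_max_right _ _)
  exact ⟨ha0.trans l1, ha.mono l1 l1, hb.mono l2 l2, hc.mono l3 l3⟩

end

/-! ### Estimates for the Levi sum -/

noncomputable section

/-- On `0 ≤ τ < t ≤ T` the iterated space-time kernels of `kap` are the iterates `(LZ)_{m+1}`:
the cut-off of `kap` confines the time integration to `(τ, t)`. -/
lemma LZm_eq_kit {T R lam α C M : ℝ} (hT : 0 < T) (hlam : 0 < lam) (hα : 0 < α) (hC : 0 < C)
    (hM : 0 ≤ M) {a b c : ℝ → ℝ → ℝ} (h : Coef T R lam α a b c)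
    (hb : ∀ X Ξ, |kap T a b c X Ξ| ≤ M * gk C (α / 2) (X - Ξ)) (m : ℕ) :
    ∀ x t ξ τ : ℝ, 0 ≤ τ → τ < t → t ≤ T →
      LZm a b c m x t ξ τ = kit (kap T a b c) m (t, x) (τ, ξ) := by
  have hs : 0 < α / 2 := by positivity
  have hm := measurable_kap hT hα h
  have base : ∀ x t ξ τ : ℝ, 0 ≤ τ → τ < t → t ≤ T →
      LZ1 a b c x t ξ τ = kap T a b c (t, x) (τ, ξ) := by
    intro x t ξ τ h1 h2 h3
    rw [LZ1_eq h2 (by linarith [h.low ξ τ h1 (by linarith)])]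
    simp only [kap]
    rw [if_pos ⟨h1, h2, h3⟩]
  induction m with
  | zero => exact base
  | succ m ih =>
    intro x t ξ τ h1 h2 h3
    have hz1 : ∀ σ y, t ≤ σ → kap T a b c (t, x) (σ, y) = 0 := by
      intro σ y hσ
      simp only [kap]
      rw [if_neg (fun hh => by linarith [hh.2.1])]
    have hz2 : ∀ σ y, σ ≤ τ → kit (kap T a b c) m (σ, y) (τ, ξ) = 0 := by
      intro σ y hσ
      have := kit_bound hC hs hM hb m (σ, y) (τ, ξ)
      rw [gk_of_nonpos (by simp only [Prod.mk_sub_mk]; linarith), mul_zero] at this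
      exact abs_nonpos_iff.mp this
    have hI := kit_integrable hC hs hM hm hm hb hb m (t, x) (τ, ξ)
    change ∫ σ in τ..t, ∫ y : ℝ, LZ1 a b c x t y σ * LZm a b c m y σ ξ τ =
      ∫ P, kap T a b c (t, x) P * kit (kap T a b c) m P (τ, ξ)
    rw [Measure.volume_eq_prod] at hI ⊢
    rw [integral_prod _ hI, intervalIntegral.integral_of_le h2.le, integral_Ioc_eq_integral_Ioo]
    have hz : ∀ σ, σ ∉ Set.Ioo τ t →
        ∫ y, kap T a b c (t, x) (σ, y) * kit (kap T a b c) m (σ, y) (τ, ξ) = 0 := by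
      intro σ hσ
      rw [Set.mem_Ioo, not_and_or, not_lt, not_lt] at hσ
      rcases hσ with hσ | hσ
      · simp [hz2 _ _ hσ]
      · simp [hz1 _ _ hσ]
    rw [← setIntegral_eq_integral_of_forall_compl_eq_zero hz]
    refine setIntegral_congr_fun measurableSet_Ioo (fun σ hσ => ?_)
    refine integral_congr_ae (Eventually.of_forall fun y => ?_)
    simp only
    rw [base x t y σ (by linarith [hσ.1]) hσ.2 h3, ih y σ ξ τ h1 hσ.1 (by linarith [hσ.2])]

lemma norm_sign_mul (m : ℕ) (z : ℝ) : ‖(-1 : ℝ) ^ (m + 1) * z‖ = |z| := by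
  rw [norm_mul, norm_pow, norm_neg, norm_one, one_pow, one_mul, Real.norm_eq_abs]

/-- The two estimates for the Levi sum: Lipschitz dependence on the coefficients, and Hölder
continuity in `x`, both with Gaussian weights. -/
lemma phi_bounds {T R lam α γ : ℝ} (hT : 0 < T) (hR : 0 < R) (hlam : 0 < lam)
    (hα : 0 < α) (hα1 : α ≤ 1) (hγ0 : 0 < γ) (hγα : γ < α) :
    ∃ C, 0 < C ∧ C < 1 / (4 * R) ∧ ∃ K, 0 < K ∧
      (∀ a b c a' b' c', Coef T R lam α a b c → Coef T R lam α a' b' c' →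
        ∀ x ξ t τ : ℝ, 0 ≤ τ → τ < t → t ≤ T →
          |phiP a b c x t ξ τ - phiP a' b' c' x t ξ τ| ≤ K * vDist T α a b c a' b' c' *
            ((t - τ) ^ (α / 2 - 3 / 2) * Real.exp (-C * (x - ξ) ^ 2 / (t - τ)))) ∧
      (∀ a b c, Coef T R lam α a b c → ∀ x y ξ t τ : ℝ, 0 ≤ τ → τ < t → t ≤ T →
          |phiP a b c x t ξ τ - phiP a b c y t ξ τ| ≤ K * |x - y| ^ γ *
            ((t - τ) ^ ((α - γ) / 2 - 3 / 2) * (Real.exp (-C * (x - ξ) ^ 2 / (t - τ)) +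
              Real.exp (-C * (y - ξ) ^ 2 / (t - τ))))) := by
  obtain ⟨C, hC, hCR, M, hM, hbd, hdiff, hhol⟩ := kernel_bounds hT hR hlam hα hα1 hγ0 hγα
  have hs : 0 < α / 2 := by positivity
  have hs' : 0 < (α - γ) / 2 := by linarith
  obtain ⟨S, hS, hS1⟩ := tsum_gk hC hs hs hM hT
  obtain ⟨S', hS', hS1'⟩ := tsum_gk hC hs' hs hM hT
  have hphi : ∀ a b c, Coef T R lam α a b c → ∀ x ξ t τ : ℝ, 0 ≤ τ → τ < t → t ≤ T →
      phiP a b c x t ξ τ = ∑' m : ℕ, (-1 : ℝ) ^ (m + 1) * kit (kap T a b c) m (t, x) (τ, ξ) := by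
    intro a b c h x ξ t τ h1 h2 h3
    unfold phiP
    refine tsum_congr fun m => ?_
    rw [LZm_eq_kit hT hlam hα hC hM h (hbd a b c h) m x t ξ τ h1 h2 h3]
  have hsum : ∀ a b c, Coef T R lam α a b c → ∀ x ξ t τ : ℝ, 0 ≤ τ → τ < t → t ≤ T →
      Summable (fun m : ℕ => (-1 : ℝ) ^ (m + 1) * kit (kap T a b c) m (t, x) (τ, ξ)) := by
    intro a b c h x ξ t τ h1 h2 h3
    have hd : 0 < t - τ := by linarith
    refine Summable.of_norm_bounded (hS1 ((t, x) - (τ, ξ)) hd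
      (show t - τ ≤ T by linarith)).1 fun m => ?_
    rw [norm_sign_mul]
    refine (kit_bound hC hs hM (hbd a b c h) m _ _).trans ?_
    have hg := gk_nonneg (C := C) (s := α / 2 + m * (α / 2)) (by positivity) ((t, x) - (τ, ξ))
    have h5 : 0 ≤ (m : ℝ) * M ^ (m + 1) := by positivity
    gcongr
    linarith
  refine ⟨C, hC, hCR, S + S', by positivity, ?_, ?_⟩
  · intro a b c a' b' c' h h' x ξ t τ h1 h2 h3
    have hd : 0 < t - τ := by linarith
    have hP : 0 < (t - τ) ^ (α / 2 - 3 / 2) := Real.rpow_pos_of_pos hd _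
    obtain ⟨d0, da, db, dc⟩ := inC_vDist h h'
    set d := vDist T α a b c a' b' c' with hddef
    obtain ⟨s1, s2⟩ := hS1 ((t, x) - (τ, ξ)) hd (show t - τ ≤ T by linarith)
    rw [hphi a b c h x ξ t τ h1 h2 h3, hphi a' b' c' h' x ξ t τ h1 h2 h3,
      ← (hsum a b c h x ξ t τ h1 h2 h3).tsum_sub (hsum a' b' c' h' x ξ t τ h1 h2 h3)]
    have key := tsum_of_norm_bounded (s1.hasSum.mul_left d) (f := fun m : ℕ =>
      (-1 : ℝ) ^ (m + 1) * kit (kap T a b c) m (t, x) (τ, ξ) -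
        (-1 : ℝ) ^ (m + 1) * kit (kap T a' b' c') m (t, x) (τ, ξ)) (fun m => by
        rw [← mul_sub, norm_sign_mul]
        refine (kit_diff hC hs hM (measurable_kap hT hα h) (measurable_kap hT hα h')
          (hbd a b c h) (hbd a' b' c' h') d0
          (hdiff a b c a' b' c' d h h' d0 da db dc) m _ _).trans (le_of_eq ?_)
        ring)
    rw [Real.norm_eq_abs] at key
    refine key.trans ?_
    calc _ ≤ d * (S * ((t - τ) ^ (α / 2 - 3 / 2) *
            Real.exp (-C * (x - ξ) ^ 2 / (t - τ)))) := by
          gcongr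
          exact s2
      _ = S * d * ((t - τ) ^ (α / 2 - 3 / 2) * Real.exp (-C * (x - ξ) ^ 2 / (t - τ))) := by ring
      _ ≤ _ := by
          gcongr
          linarith
  · intro a b c h x y ξ t τ h1 h2 h3
    have hd : 0 < t - τ := by linarith
    have hP : 0 < (t - τ) ^ ((α - γ) / 2 - 3 / 2) := Real.rpow_pos_of_pos hd _
    obtain ⟨s1, s2⟩ := hS1' ((t, x) - (τ, ξ)) hd (show t - τ ≤ T by linarith)
    obtain ⟨r1, r2⟩ := hS1' ((t, y) - (τ, ξ)) hd (show t - τ ≤ T by linarith)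
    have hH : 0 ≤ |x - y| ^ γ := by positivity
    rw [hphi a b c h x ξ t τ h1 h2 h3, hphi a b c h y ξ t τ h1 h2 h3,
      ← (hsum a b c h x ξ t τ h1 h2 h3).tsum_sub (hsum a b c h y ξ t τ h1 h2 h3)]
    have key := tsum_of_norm_bounded ((s1.hasSum.add r1.hasSum).mul_left (|x - y| ^ γ))
      (f := fun m : ℕ => (-1 : ℝ) ^ (m + 1) * kit (kap T a b c) m (t, x) (τ, ξ) -
        (-1 : ℝ) ^ (m + 1) * kit (kap T a b c) m (t, y) (τ, ξ)) (fun m => by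
        rw [← mul_sub, norm_sign_mul]
        refine (kit_hol hC hs hM (measurable_kap hT hα h) (hbd a b c h) hs' hH
          (hhol a b c h t x y) m (τ, ξ)).trans ?_
        have hg := gk_nonneg (C := C) (s := (α - γ) / 2 + m * (α / 2)) (by positivity)
          ((t, x) - (τ, ξ))
        have hg' := gk_nonneg (C := C) (s := (α - γ) / 2 + m * (α / 2)) (by positivity)
          ((t, y) - (τ, ξ))
        have h5 : 0 ≤ (m : ℝ) * M ^ (m + 1) := by positivity
        rw [← mul_add, mul_comm (M ^ (m + 1)), mul_assoc]
        gcongr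
        linarith)
    rw [Real.norm_eq_abs] at key
    refine key.trans ?_
    calc _ ≤ |x - y| ^ γ * (S' * ((t - τ) ^ ((α - γ) / 2 - 3 / 2) *
            Real.exp (-C * (x - ξ) ^ 2 / (t - τ))) + S' * ((t - τ) ^ ((α - γ) / 2 - 3 / 2) *
            Real.exp (-C * (y - ξ) ^ 2 / (t - τ)))) :=
          mul_le_mul_of_nonneg_left (add_le_add s2 r2) hH
      _ = S' * |x - y| ^ γ * ((t - τ) ^ ((α - γ) / 2 - 3 / 2) *
            (Real.exp (-C * (x - ξ) ^ 2 / (t - τ)) +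
              Real.exp (-C * (y - ξ) ^ 2 / (t - τ)))) := by ring
      _ ≤ _ := by
          gcongr
          linarith

/-- Geometric interpolation between two bounds of the same quantity. -/
lemma le_interp {D A B β : ℝ} (hD : 0 ≤ D) (hA : D ≤ A) (hB : D ≤ B) (h0 : 0 ≤ β) (h1 : β ≤ 1) :
    D ≤ A ^ β * B ^ (1 - β) := by
  calc D = D ^ β * D ^ (1 - β) := by
        rw [← Real.rpow_add_of_nonneg hD h0 (by linarith)]
        simp
    _ ≤ _ := by
        have : 0 ≤ 1 - β := by linarith
        have : 0 ≤ A := hD.trans hA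
        gcongr

end

/-- Lemma 3: continuous dependence of `φ` on the coefficients. -/
theorem phi_dependence
    (T R lam α : ℝ) (hT : 0 < T) (hR : 0 < R) (hlam : 0 < lam)
    (hα : 0 < α) (hα1 : α ≤ 1) (hlR : lam < R)
    (β γ : ℝ) (hβ0 : 0 ≤ β) (hβ1 : β ≤ 1) (hγ0 : 0 < γ) (hγα : γ < α) :
    ∃ C : ℝ, 0 < C ∧ C < 1 / (4 * R) ∧ ∃ K : ℝ, 0 < K ∧
      ∀ a b c abar bbar cbar : ℝ → ℝ → ℝ,
        memB T R lam α a b c → memB T R lam α abar bbar cbar →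
        ∀ x y ξ t τ : ℝ, 0 ≤ τ → τ < t → t ≤ T →
          (|phiP a b c x t ξ τ - phiP abar bbar cbar x t ξ τ| ≤
            K * vDist T α a b c abar bbar cbar *
              (t - τ) ^ (-((3 - α) / 2)) * Real.exp (-C * (x - ξ) ^ 2 / (t - τ))) ∧
          (|(phiP a b c x t ξ τ - phiP abar bbar cbar x t ξ τ) -
              (phiP a b c y t ξ τ - phiP abar bbar cbar y t ξ τ)| ≤
            K * vDist T α a b c abar bbar cbar ^ β * |x - y| ^ (γ * (1 - β)) *
              (t - τ) ^ (-((3 - (α - γ * (1 - β))) / 2)) *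
              (Real.exp (-C * (x - ξ) ^ 2 / (t - τ)) +
                Real.exp (-C * (y - ξ) ^ 2 / (t - τ)))) := by
  obtain ⟨C, hC, hCR, K, hK, hdep, hhol⟩ := phi_bounds hT hR hlam hα hα1 hγ0 hγα
  refine ⟨C, hC, hCR, 2 * K, by positivity, ?_⟩
  intro a b c a' b' c' hv hv' x y ξ t τ h1 h2 h3
  have h := hv.coef
  have h' := hv'.coef
  have hδ : 0 < t - τ := by linarith
  obtain ⟨d0, -⟩ := inC_vDist h h'
  have ex := hdep a b c a' b' c' h h' x ξ t τ h1 h2 h3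
  have ey := hdep a b c a' b' c' h h' y ξ t τ h1 h2 h3
  have f := hhol a b c h x y ξ t τ h1 h2 h3
  have f' := hhol a' b' c' h' x y ξ t τ h1 h2 h3
  set d := vDist T α a b c a' b' c'
  set δ := t - τ
  have Px := Real.exp_pos (-C * (x - ξ) ^ 2 / δ)
  have Py := Real.exp_pos (-C * (y - ξ) ^ 2 / δ)
  set Ex := Real.exp (-C * (x - ξ) ^ 2 / δ)
  set Ey := Real.exp (-C * (y - ξ) ^ 2 / δ)
  have p1 : 0 < δ ^ (α / 2 - 3 / 2) := Real.rpow_pos_of_pos hδ _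
  have p2 : 0 < δ ^ ((α - γ) / 2 - 3 / 2) := Real.rpow_pos_of_pos hδ _
  constructor
  · rw [show -((3 - α) / 2) = α / 2 - 3 / 2 by ring]
    refine ex.trans ?_
    rw [mul_assoc (2 * K * d)]
    have : 0 ≤ K * d * (δ ^ (α / 2 - 3 / 2) * Ex) := by positivity
    linarith
  · set D := (phiP a b c x t ξ τ - phiP a' b' c' x t ξ τ) -
      (phiP a b c y t ξ τ - phiP a' b' c' y t ξ τ) with hD
    -- the two bounds to interpolate: smallness in `v - v̄`, and Hölder continuity in `x`
    have b1 : |D| ≤ 2 * K * d * δ ^ (α / 2 - 3 / 2) * (Ex + Ey) := by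
      have := (abs_sub _ _).trans (add_le_add ex ey)
      have h4 : 0 ≤ K * d * δ ^ (α / 2 - 3 / 2) * (Ex + Ey) := by positivity
      linarith
    have b2 : |D| ≤ 2 * K * |x - y| ^ γ * δ ^ ((α - γ) / 2 - 3 / 2) * (Ex + Ey) := by
      have e : D = (phiP a b c x t ξ τ - phiP a b c y t ξ τ) -
          (phiP a' b' c' x t ξ τ - phiP a' b' c' y t ξ τ) := by rw [hD]; ring
      rw [e]
      have := (abs_sub _ _).trans (add_le_add f f')
      linarith
    refine (le_interp (abs_nonneg _) b1 b2 hβ0 hβ1).trans (le_of_eq ?_)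
    have hE : 0 < Ex + Ey := by positivity
    have hxy : 0 ≤ |x - y| := abs_nonneg _
    rw [Real.mul_rpow (by positivity) hE.le, Real.mul_rpow (by positivity) p1.le,
      Real.mul_rpow (by positivity) d0, Real.mul_rpow (by positivity) hE.le,
      Real.mul_rpow (by positivity) p2.le,
      Real.mul_rpow (x := 2 * K) (y := |x - y| ^ γ) (by positivity) (by positivity),
      ← Real.rpow_mul hxy, ← Real.rpow_mul hδ.le, ← Real.rpow_mul hδ.le]
    have split : ∀ z : ℝ, 0 < z → z ^ β * z ^ (1 - β) = z := fun z hz => by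
      rw [← Real.rpow_add hz]
      simp
    have eδ : δ ^ (-((3 - (α - γ * (1 - β))) / 2)) =
        δ ^ ((α / 2 - 3 / 2) * β) * δ ^ (((α - γ) / 2 - 3 / 2) * (1 - β)) := by
      rw [← Real.rpow_add hδ]
      congr 1
      ring
    rw [eδ]
    conv_rhs => rw [← split (2 * K) (by positivity), ← split (Ex + Ey) hE]
    ring
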